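/- arXiv:2512.13445 — 5 statements merged into one kernel-verified Lean document; each statement's English description precedes it below -/
import Mathlib

section
/- Let F be a field with more than k elements, let k ≥ 4 and n ≥ k + 2 with n + k odd, and let T be a linear map on the space of n×k matrices over F. Then det_{n,k}(T(X)) = det_{n,k}(X) for all n×k matrices X if and only if there exist an n×n matrix A and a k×k matrix B over F satisfying det_{n,k}(A(|d]) · det(B) = sgn(d) for every k-element subset d of {1,...,n}, and a linear map φ from M_{n×k}(F) to W_{n,k}, such that T(X) = AXB + φ(X) for all n×k matrices X. -/
open Classical in
noncomputable def cullisDet {F : Type*} [Field F] {n k : ℕ}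
    (X : Matrix (Fin n) (Fin k) F) : F :=
  ∑ f : Fin k → Fin n, if StrictMono f then
    (-1 : F) ^ (∑ j : Fin k, ((f j : ℕ) - (j : ℕ))) * (X.submatrix f id).det
  else 0

/-- Linear maps whose values are everywhere parallel to those of a map of rank at least two. -/
lemma prop_of_parallel {F V W : Type*} [Field F] [AddCommGroup V] [Module F V]
    [AddCommGroup W] [Module F W] (f g : V →ₗ[F] W)
    (h : ∀ v, ¬ LinearIndependent F ![f v, g v])
    (u₁ u₂ : V) (hu : LinearIndependent F ![f u₁, f u₂]) : ∃ c : F, g = c • f := by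
  have key : ∀ v, f v ≠ 0 → ∃ c : F, g v = c • f v := by
    intro v hv
    have := h v
    rw [LinearIndependent.pair_iff' hv] at this
    push Not at this
    obtain ⟨c, hc⟩ := this
    exact ⟨c, hc.symm⟩
  have indep : ∀ (v w : V) (c d : F), LinearIndependent F ![f v, f w] → g v = c • f v → g w = d • f w →
      c = d := by
    intro v w c d hvw hc hd
    have hne : f (v + w) ≠ 0 := by
      intro h0
      have := (LinearIndependent.pair_iff.1 hvw) 1 1 (by simpa using h0)
      simp at this
    obtain ⟨e, he⟩ := key _ hne
    have h1 : (c - e) • f v + (d - e) • f w = 0 := by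
      simp only [map_add, smul_add] at he
      rw [hc, hd] at he
      simp only [sub_smul]
      rw [sub_add_sub_comm, he, sub_self]
    have := (LinearIndependent.pair_iff.1 hvw) _ _ h1
    rw [sub_eq_zero.1 this.1, sub_eq_zero.1 this.2]
  have hf1 : f u₁ ≠ 0 := by simpa using hu.ne_zero 0
  have hf2 : f u₂ ≠ 0 := by simpa using hu.ne_zero 1
  obtain ⟨c, hc⟩ := key u₁ hf1
  obtain ⟨c', hc'⟩ := key u₂ hf2
  have hcc : c = c' := indep _ _ _ _ hu hc hc'
  have const : ∀ v, f v ≠ 0 → g v = c • f v := by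
    intro v hv
    obtain ⟨d, hd⟩ := key v hv
    by_cases h1 : LinearIndependent F ![f u₁, f v]
    · rw [indep _ _ _ _ h1 hc hd, hd]
    · rw [LinearIndependent.pair_iff' hf1] at h1
      push Not at h1
      obtain ⟨a, ha⟩ := h1
      have ha0 : a ≠ 0 := by
        rintro rfl
        exact hv (by rw [← ha, zero_smul])
      have h2 : LinearIndependent F ![f u₂, f v] := by
        rw [LinearIndependent.pair_iff' hf2]
        intro b hb
        have := (LinearIndependent.pair_iff.1 hu) a (-b) (by rw [ha, ← hb]; simp)
        exact ha0 this.1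
      rw [hcc, indep _ _ _ _ h2 hc' hd, hd]
  refine ⟨c, LinearMap.ext fun v => ?_⟩
  rw [LinearMap.smul_apply]
  by_cases hv : f v = 0
  · have h1 := const (v + u₁) (by simpa [hv] using hf1)
    simp only [map_add, hv, zero_add, hc] at h1
    rw [hv]
    simpa using h1
  · exact const v hv

/-- An injective linear map into `V^k` with all values of rank at most one. -/
lemma rankOne_form {F V : Type*} [Field F] [AddCommGroup V] [Module F V]
    [FiniteDimensional F V] {k : ℕ} (hkV : k < Module.finrank F V)
    (L : V →ₗ[F] (Fin k → V)) (hL : Function.Injective L)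
    (h : ∀ v i j, ¬ LinearIndependent F ![L v i, L v j]) :
    ∃ (b : Fin k → F) (A : V →ₗ[F] V), ∀ v i, L v i = b i • A v := by
  by_cases h2 : ∃ i u₁ u₂, LinearIndependent F ![L u₁ i, L u₂ i]
  · obtain ⟨i, u₁, u₂, hu⟩ := h2
    have : ∀ j, ∃ c : F, (LinearMap.proj j ∘ₗ L : V →ₗ[F] V) = c • (LinearMap.proj i ∘ₗ L) := by
      intro j
      exact prop_of_parallel _ _ (fun v => h v i j) u₁ u₂ hu
    choose b hb using this
    refine ⟨b, LinearMap.proj i ∘ₗ L, fun v j => ?_⟩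
    exact LinearMap.congr_fun (hb j) v
  · exfalso
    push Not at h2
    -- each component has image in a line
    have : ∀ i, ∃ l : V →ₗ[F] F, ∀ v, l v = 0 → L v i = 0 := by
      intro i
      by_cases h0 : ∀ v, L v i = 0
      · exact ⟨0, fun v _ => h0 v⟩
      · push Not at h0
        obtain ⟨u, hu⟩ := h0
        obtain ⟨g, hg⟩ := Module.Projective.exists_dual_ne_zero F hu
        refine ⟨g ∘ₗ LinearMap.proj i ∘ₗ L, fun v hv => ?_⟩
        have := h2 i u v
        rw [LinearIndependent.pair_iff' hu] at this
        push Not at this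
        obtain ⟨c, hc⟩ := this
        have hv' : g (L v i) = 0 := hv
        rw [← hc, map_smul, smul_eq_mul] at hv'
        rcases mul_eq_zero.1 hv' with h | h
        · rw [← hc, h, zero_smul]
        · exact absurd h hg
    choose l hl using this
    have hker : LinearMap.ker (LinearMap.pi l) ≠ ⊥ := by
      apply LinearMap.ker_ne_bot_of_finrank_lt
      simpa using hkV
    obtain ⟨v, hv, hv0⟩ := (Submodule.ne_bot_iff _).1 hker
    apply hv0
    apply hL
    rw [map_zero]
    funext i
    exact hl i v (congrFun (LinearMap.mem_ker.1 hv) i)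

/-- The coefficient of `t ^ r` in `ω (X + t M)`. -/
noncomputable def wCoef {F V : Type*} [Field F] [AddCommGroup V] [Module F V] {k : ℕ}
    (ω : V [⋀^Fin k]→ₗ[F] F) (r : ℕ) (X M : Fin k → V) : F :=
  ∑ s ∈ (Finset.univ : Finset (Finset (Fin k))) with s.card = r, ω (s.piecewise M X)

open Polynomial in
/-- The polynomial `ω (X + t M)`. -/
noncomputable def wPoly {F V : Type*} [Field F] [AddCommGroup V] [Module F V] {k : ℕ}
    (ω : V [⋀^Fin k]→ₗ[F] F) (X M : Fin k → V) : F[X] :=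
  ∑ s : Finset (Fin k), monomial s.card (ω (s.piecewise M X))

lemma wPoly_eval {F V : Type*} [Field F] [AddCommGroup V] [Module F V] {k : ℕ}
    (ω : V [⋀^Fin k]→ₗ[F] F) (X M : Fin k → V) (t : F) :
    (wPoly ω X M).eval t = ω (X + t • M) := by
  rw [add_comm, ω.map_add_univ, wPoly, Polynomial.eval_finsetSum]
  refine Finset.sum_congr rfl fun s _ => ?_
  have := ω.toMultilinearMap.map_piecewise_smul (fun _ => t) (s.piecewise M X) s
  rw [Polynomial.eval_monomial]
  have h2 : s.piecewise (fun i => t • (s.piecewise M X) i) (s.piecewise M X)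
      = s.piecewise (t • M) X := by
    funext i
    by_cases hi : i ∈ s <;> simp [hi]
  rw [h2] at this
  simp only [Finset.prod_const, AlternatingMap.coe_multilinearMap, smul_eq_mul] at this
  rw [this, mul_comm]

lemma wPoly_coeff {F V : Type*} [Field F] [AddCommGroup V] [Module F V] {k : ℕ}
    (ω : V [⋀^Fin k]→ₗ[F] F) (X M : Fin k → V) (r : ℕ) :
    (wPoly ω X M).coeff r = wCoef ω r X M := by
  rw [wPoly, Polynomial.finsetSum_coeff, wCoef, Finset.sum_filter]
  refine Finset.sum_congr rfl fun s _ => ?_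
  rw [Polynomial.coeff_monomial]

lemma wPoly_degree {F V : Type*} [Field F] [AddCommGroup V] [Module F V] {k : ℕ}
    (ω : V [⋀^Fin k]→ₗ[F] F) (X M : Fin k → V) :
    (wPoly ω X M).degree < ((k + 1 : ℕ) : WithBot ℕ) := by
  rw [wPoly]
  refine lt_of_le_of_lt (Polynomial.degree_sum_le _ _) ?_
  rw [Finset.sup_lt_iff (by exact WithBot.bot_lt_coe _)]
  intro s _
  refine lt_of_le_of_lt (Polynomial.degree_monomial_le _ _) ?_
  have := Finset.card_le_univ s
  simp only [Fintype.card_fin] at this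
  exact_mod_cast Nat.lt_succ_of_le this

lemma wCoef_eq {F V V' : Type*} [Field F] [AddCommGroup V] [Module F V]
    [AddCommGroup V'] [Module F V'] {k : ℕ} (hF : (k : Cardinal) < Cardinal.mk F)
    (ω : V [⋀^Fin k]→ₗ[F] F) (ω' : V' [⋀^Fin k]→ₗ[F] F) (X M : Fin k → V) (Y N : Fin k → V')
    (h : ∀ t : F, ω (X + t • M) = ω' (Y + t • N)) (r : ℕ) :
    wCoef ω r X M = wCoef ω' r Y N := by
  obtain ⟨s, hs⟩ : ∃ s : Finset F, s.card = k + 1 := by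
    have h1 : ((k + 1 : ℕ) : Cardinal) ≤ Cardinal.mk F := by
      push_cast
      exact Cardinal.natCast_add_one_le_iff.2 hF
    obtain ⟨s, hs⟩ := Cardinal.exists_finset_eq_card h1
    exact ⟨s, hs.symm⟩
  rw [← wPoly_coeff, ← wPoly_coeff]
  congr 1
  refine Polynomial.eq_of_degrees_lt_of_eval_finset_eq s ?_ ?_ ?_
  · rw [hs]; exact wPoly_degree _ _ _
  · rw [hs]; exact wPoly_degree _ _ _
  · intro t _
    rw [wPoly_eval, wPoly_eval, h]

lemma wCoef_one {F V : Type*} [Field F] [AddCommGroup V] [Module F V] {k : ℕ}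
    (ω : V [⋀^Fin k]→ₗ[F] F) (X M : Fin k → V) (i : Fin k) (hX : X i = 0) :
    wCoef ω 1 X M = ω (Function.update X i (M i)) := by
  rw [wCoef, Finset.sum_eq_single {i}]
  · rw [Finset.piecewise_singleton]
  · intro s hs hsi
    refine ω.map_coord_zero i ?_
    have hi : i ∉ s := by
      intro hi
      obtain ⟨a, rfl⟩ := Finset.card_eq_one.1 (Finset.mem_filter.1 hs).2
      simp at hi
      exact hsi (by rw [hi])
    simp [hi, hX]
  · intro h; simp at h

lemma wCoef_two {F V : Type*} [Field F] [AddCommGroup V] [Module F V] {k : ℕ}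
    (ω : V [⋀^Fin k]→ₗ[F] F) (X M : Fin k → V) (i j : Fin k) (hij : i ≠ j) (hX : X i = 0)
    (hX' : X j = 0) :
    wCoef ω 2 X M = ω (Function.update (Function.update X i (M i)) j (M j)) := by
  rw [wCoef, Finset.sum_eq_single {i, j}]
  · congr 1
    funext l
    by_cases h1 : l = j
    · subst h1; simp
    · by_cases h2 : l = i
      · subst h2; simp [h1]
      · simp [h1, h2]
  · intro s hs hsi
    have h2 := (Finset.mem_filter.1 hs).2
    by_cases hi : i ∈ s
    · by_cases hj : j ∈ s
      · exfalso
        apply hsi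
        symm
        apply Finset.eq_of_subset_of_card_le
        · intro l hl
          simp at hl
          rcases hl with rfl | rfl <;> assumption
        · rw [h2, Finset.card_pair hij]
      · exact ω.map_coord_zero j (by simp [hj, hX'])
    · exact ω.map_coord_zero i (by simp [hi, hX])
  · intro h; simp [Finset.card_pair hij] at h

lemma wCoef_two_zero {F V : Type*} [Field F] [AddCommGroup V] [Module F V] {k : ℕ}
    (ω : V [⋀^Fin k]→ₗ[F] F) (X : Fin k → V) (c : Fin k → F) (v : V) :
    wCoef ω 2 X (fun i => c i • v) = 0 := by
  refine Finset.sum_eq_zero fun s hs => ?_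
  obtain ⟨i, j, hij, rfl⟩ := Finset.card_eq_two.1 (Finset.mem_filter.1 hs).2
  have h : ({i, j} : Finset (Fin k)).piecewise (fun i => c i • v) X =
      Function.update (Function.update X i (c i • v)) j (c j • v) := by
    funext l
    by_cases h1 : l = j
    · subst h1; simp
    · by_cases h2 : l = i
      · subst h2; simp [h1]
      · simp [h1, h2]
  rw [h, ω.map_update_smul, Function.update_comm hij, ω.map_update_smul]
  rw [ω.map_eq_zero_of_eq _ (i := i) (j := j) (by simp [hij.symm]) hij]
  simp

/-- The abstract theorem: preservers of an alternating form whose contractions with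
nonzero decomposable bivectors do not vanish. -/
theorem abstract_preserver {F V : Type*} [Field F] [AddCommGroup V] [Module F V]
    [FiniteDimensional F V] {k : ℕ} (hk : 2 ≤ k) (hkV : k < Module.finrank F V)
    (hF : (k : Cardinal) < Cardinal.mk F)
    (ω : V [⋀^Fin k]→ₗ[F] F)
    (hP : ∀ m₁ m₂ : V, LinearIndependent F ![m₁, m₂] → ∀ i j : Fin k, i ≠ j →
      ∃ x : Fin k → V, ω (Function.update (Function.update x i m₁) j m₂) ≠ 0) :
    (∀ M : Fin k → V, (∀ X, ∀ t : F, ω (X + t • M) = ω X) → M = 0) ∧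
    ∀ S : (Fin k → V) →ₗ[F] (Fin k → V), (∀ X, ω (S X) = ω X) →
      Function.Bijective S ∧
      ∃ (A : V →ₗ[F] V) (B : Matrix (Fin k) (Fin k) F),
        ∀ X i, S X i = ∑ j, B j i • A (X j) := by
  have hrad : ∀ M : Fin k → V, (∀ X, ∀ t : F, ω (X + t • M) = ω X) → M = 0 := by
    intro M hM
    funext i
    by_contra hne
    have hne' : M i ≠ 0 := hne
    obtain ⟨m₂, hm⟩ : ∃ m₂, LinearIndependent F ![M i, m₂] := by
      obtain ⟨v, hv⟩ := exists_linearIndependent_pair_of_one_lt_finrank (R := F) (by omega) hne'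
      exact ⟨v, hv⟩
    obtain ⟨j, hj⟩ : ∃ j : Fin k, i ≠ j := by
      have : Nontrivial (Fin k) := Fin.nontrivial_iff_two_le.2 hk
      obtain ⟨j, hj⟩ := exists_ne i
      exact ⟨j, hj.symm⟩
    obtain ⟨x, hx⟩ := hP _ _ hm i j hj
    apply hx
    have h1 : wCoef ω 1 (Function.update (Function.update x j m₂) i 0) M =
        wCoef ω 1 (Function.update (Function.update x j m₂) i 0) 0 := by
      refine wCoef_eq hF _ _ _ _ _ _ (fun t => ?_) 1
      rw [hM]; simp
    rw [wCoef_one _ _ _ i (by simp), wCoef_one _ _ _ i (by simp)] at h1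
    rw [Function.update_comm hj]
    simp only [Function.update_idem, Pi.zero_apply] at h1
    rw [h1]
    exact ω.map_coord_zero i (by simp)
  refine ⟨hrad, fun S hS => ?_⟩
  have hinj : Function.Injective S := by
    rw [← LinearMap.ker_eq_bot, LinearMap.ker_eq_bot']
    intro M hM
    apply hrad
    intro X t
    rw [← hS, map_add, map_smul, hM, smul_zero, add_zero, hS]
  have hbij : Function.Bijective S := ⟨hinj, LinearMap.injective_iff_surjective.1 hinj⟩
  refine ⟨hbij, ?_⟩
  -- rank one elements go to rank one elements
  have hrk : ∀ (c : Fin k → F) (v : V) (i j : Fin k),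
      ¬ LinearIndependent F ![S (fun l => c l • v) i, S (fun l => c l • v) j] := by
    intro c v i j hli
    have hij : i ≠ j := by
      rintro rfl
      have := hli.injective (a₁ := 0) (a₂ := 1) (by simp)
      simp at this
    obtain ⟨x, hx⟩ := hP _ _ hli i j hij
    apply hx
    obtain ⟨X, hX⟩ := hbij.2 (Function.update (Function.update x i 0) j 0)
    have h1 : wCoef ω 2 X (fun l => c l • v) = wCoef ω 2 (S X) (S (fun l => c l • v)) := by
      refine wCoef_eq hF _ _ _ _ _ _ (fun t => ?_) 2
      rw [← hS, map_add, map_smul]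
    rw [wCoef_two_zero, wCoef_two _ _ _ i j hij (by rw [hX]; simp [hij]) (by rw [hX]; simp)] at h1
    rw [h1, hX]
    congr 1
    funext l
    simp only [Function.update_apply]
    split_ifs <;> rfl
  have hsingle : ∀ (j : Fin k) (v : V), (Pi.single j v : Fin k → V) =
      fun l => (Pi.single j (1 : F) : Fin k → F) l • v := by
    intro j v
    funext l
    by_cases h : l = j
    · subst h; simp
    · simp [Pi.single_eq_of_ne h]
  have hform : ∀ j : Fin k, ∃ (b : Fin k → F) (A : V →ₗ[F] V),
      ∀ v i, S (Pi.single j v) i = b i • A v := by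
    intro j
    refine rankOne_form hkV (S ∘ₗ LinearMap.single F (fun _ => V) j)
      (hinj.comp (Pi.single_injective (M := fun _ => V) j)) ?_
    intro v i i'
    have := hrk (Pi.single j 1) v i i'
    rwa [← hsingle] at this
  choose b A hbA using hform
  have hAinj : ∀ j, Function.Injective (A j) := by
    intro j
    rw [← LinearMap.ker_eq_bot, LinearMap.ker_eq_bot']
    intro v hv
    have : S (Pi.single j v) = 0 := by
      funext i
      rw [hbA, hv, smul_zero]; rfl
    have := hinj (this.trans (map_zero S).symm)
    simpa using this
  have hAsurj : ∀ j, Function.Surjective (A j) := fun j =>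
    LinearMap.injective_iff_surjective.1 (hAinj j)
  obtain ⟨v₁, hv₁⟩ : ∃ v : V, v ≠ 0 := by
    have : Nontrivial V := Module.nontrivial_of_finrank_pos (R := F) (by omega)
    exact exists_ne 0
  obtain ⟨v₂, hv₂⟩ : ∃ v₂, LinearIndependent F ![v₁, v₂] := by
    obtain ⟨v, hv⟩ := exists_linearIndependent_pair_of_one_lt_finrank (R := F) (by omega) hv₁
    exact ⟨v, hv⟩
  have hprop : ∀ j l, j ≠ l → ∃ c : F, A l = c • A j := by
    intro j l hjl
    refine prop_of_parallel (A j) (A l) ?_ v₁ v₂ ?_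
    · intro v hli
      have hmin : ∀ i i', b j i * b l i' = b j i' * b l i := by
        intro i i'
        by_contra hne
        have := hrk (Pi.single j 1 + Pi.single l 1) v i i'
        apply this
        have h3 : (fun t => (Pi.single j (1 : F) + Pi.single l (1 : F) : Fin k → F) t • v)
            = Pi.single j v + Pi.single l v := by
          funext t
          simp only [hsingle, Pi.add_apply, add_smul]
        rw [h3, map_add, Pi.add_apply, Pi.add_apply, hbA, hbA, hbA, hbA]
        rw [LinearIndependent.pair_iff] at hli ⊢
        intro p q hpq
        have h4 := hli (p * b j i + q * b j i') (p * b l i + q * b l i') (by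
          rw [← hpq]; module)
        have hd : b j i * b l i' - b j i' * b l i ≠ 0 := sub_ne_zero.2 hne
        constructor
        · apply (mul_eq_zero.1 (_ : p * (b j i * b l i' - b j i' * b l i) = 0)).resolve_right hd
          linear_combination b l i' * h4.1 - b j i' * h4.2
        · apply (mul_eq_zero.1 (_ : q * (b j i * b l i' - b j i' * b l i) = 0)).resolve_right hd
          linear_combination - b l i * h4.1 + b j i * h4.2
      obtain ⟨i₀, hi₀⟩ : ∃ i, b j i ≠ 0 := by
        by_contra hall
        push Not at hall
        have : S (Pi.single j v₁) = 0 := by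
          funext i
          rw [hbA, hall, zero_smul]; rfl
        have := hinj (this.trans (map_zero S).symm)
        exact hv₁ (by simpa using this)
      obtain ⟨x, hx⟩ := hAsurj j (-((b l i₀ / b j i₀) • A l v₁))
      have h0 : S (Pi.single j x + Pi.single l v₁) = 0 := by
        funext i
        rw [map_add, Pi.add_apply, hbA, hbA, hx]
        have : b l i = b j i * (b l i₀ / b j i₀) := by
          field_simp
          linear_combination hmin i₀ i
        rw [this, smul_neg, smul_smul, neg_add_cancel]; rfl
      have h1 := hinj (h0.trans (map_zero S).symm)
      have h2 := congrFun h1 l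
      simp [hjl.symm] at h2
      exact hv₁ h2
    · have := hv₂.map' (A j) (LinearMap.ker_eq_bot.2 (hAinj j))
      have h5 : ![A j v₁, A j v₂] = A j ∘ ![v₁, v₂] := by
        funext t
        fin_cases t <;> rfl
      rw [h5]
      exact this
  let j₀ : Fin k := ⟨0, by omega⟩
  have hprop' : ∀ l, ∃ c : F, A l = c • A j₀ := by
    intro l
    by_cases h : j₀ = l
    · exact ⟨1, by rw [h, one_smul]⟩
    · exact hprop _ _ h
  choose c hc using hprop'
  refine ⟨A j₀, fun j i => c j * b j i, fun X i => ?_⟩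
  have hX : X = ∑ j, Pi.single j (X j) := (Finset.univ_sum_single X).symm
  conv_lhs => rw [hX]
  rw [map_sum, Finset.sum_apply]
  refine Finset.sum_congr rfl fun j _ => ?_
  rw [hbA, hc, LinearMap.smul_apply, smul_smul, mul_comm]

open Classical in
/-- The Cullis determinant as an alternating form in the columns. -/
noncomputable def cullisAlt (F : Type*) [Field F] (n k : ℕ) :
    (Fin n → F) [⋀^Fin k]→ₗ[F] F :=
  ∑ f : Fin k → Fin n, if StrictMono f then
    ((-1 : F) ^ (∑ j : Fin k, ((f j : ℕ) - (j : ℕ)))) •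
      (Matrix.detRowAlternating (R := F) (n := Fin k)).compLinearMap (LinearMap.funLeft F F f)
  else 0

lemma altMap_sum_apply {F V W ι κ : Type*} [Field F] [AddCommGroup V] [Module F V]
    [AddCommGroup W] [Module F W]
    (s : Finset κ) (f : κ → V [⋀^ι]→ₗ[F] W) (v : ι → V) :
    (∑ a ∈ s, f a) v = ∑ a ∈ s, f a v := by
  classical
  induction s using Finset.induction_on with
  | empty => simp
  | insert a s ha ih => rw [Finset.sum_insert ha, Finset.sum_insert ha, AlternatingMap.add_apply, ih]

lemma cullisAlt_apply {F : Type*} [Field F] {n k : ℕ} (v : Fin k → Fin n → F) :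
    cullisAlt F n k v = cullisDet (Matrix.of fun i j => v j i) := by
  rw [cullisAlt, cullisDet, altMap_sum_apply]
  refine Finset.sum_congr rfl fun f _ => ?_
  split_ifs with h
  · rw [AlternatingMap.smul_apply, smul_eq_mul]
    congr 1
    rw [← Matrix.det_transpose]
    rfl
  · rfl

lemma cullisDet_eq {F : Type*} [Field F] {n k : ℕ} (X : Matrix (Fin n) (Fin k) F) :
    cullisDet X = cullisAlt F n k (fun j i => X i j) := by
  rw [cullisAlt_apply]; rfl

lemma cullisDet_mul {F : Type*} [Field F] {n k : ℕ} (X : Matrix (Fin n) (Fin k) F)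
    (B : Matrix (Fin k) (Fin k) F) : cullisDet (X * B) = cullisDet X * B.det := by
  rw [cullisDet, cullisDet, Finset.sum_mul]
  refine Finset.sum_congr rfl fun f _ => ?_
  split_ifs with h
  · have : (X * B).submatrix f id = X.submatrix f id * B := by
      ext i j
      simp [Matrix.mul_apply]
    rw [this, Matrix.det_mul, mul_assoc]
  · simp

lemma strictMono_fin_le {n k : ℕ} (f : Fin k → Fin n) (hf : StrictMono f) (j : Fin k) :
    (j : ℕ) ≤ (f j : ℕ) := by
  obtain ⟨m, hm⟩ := j
  induction m with
  | zero => simp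
  | succ m ih =>
    have h1 := ih (by omega)
    have h2 : f ⟨m, by omega⟩ < f ⟨m + 1, hm⟩ := hf (by simp [Fin.lt_def])
    simp only [Fin.lt_def] at h1 h2 ⊢
    omega

/-- Value on strictly increasing families of basis vectors. -/
lemma cullisAlt_strictMono {F : Type*} [Field F] {n k : ℕ} (g : Fin k → Fin n)
    (hg : StrictMono g) :
    cullisAlt F n k (fun j => Pi.single (g j) 1) =
      (-1 : F) ^ (∑ j : Fin k, ((g j : ℕ) - (j : ℕ))) := by
  classical
  rw [cullisAlt_apply, cullisDet, Finset.sum_eq_single g]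
  · rw [if_pos hg]
    have : (Matrix.of fun i j => (Pi.single (g j) (1 : F) : Fin n → F) i).submatrix g id = 1 := by
      ext i j
      simp [Matrix.one_apply, Pi.single_apply, hg.injective.eq_iff]
    rw [this, Matrix.det_one, mul_one]
  · intro f _ hfg
    split_ifs with hf
    · obtain ⟨i, hi⟩ : ∃ i, ∀ j, g j ≠ f i := by
        by_contra hall
        push Not at hall
        apply hfg
        choose p hp using hall
        have hpm : StrictMono p := by
          intro a b hab
          have := hf hab
          rw [← hp a, ← hp b] at this
          exact hg.lt_iff_lt.1 this
        have hpid : p = id := by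
          have h1 : Function.Bijective p := Finite.injective_iff_bijective.1 hpm.injective
          have : Set.range p = Set.range (id : Fin k → Fin k) := by
            rw [h1.2.range_eq]; simp
          exact (StrictMono.range_inj hpm strictMono_id).1 this
        funext i
        rw [← hp i, hpid]; rfl
      rw [Matrix.det_eq_zero_of_row_eq_zero i, mul_zero]
      intro j
      simp [Pi.single_apply, (hi j).symm]
    · rfl
  · intro h; simp at h

/-- Sign of the difference, as a field element. -/
def sg (F : Type*) [Field F] {n : ℕ} (a b : Fin n) : F := ((Int.sign ((b : ℤ) - (a : ℤ)) : ℤ) : F)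

/-- The sign of the sorting permutation (zero if not injective). -/
def sgs (F : Type*) [Field F] {n k : ℕ} (f : Fin k → Fin n) : F :=
  ∏ i : Fin k, ∏ j ∈ Finset.Ioi i, sg F (f i) (f j)

lemma sgs_eq {F : Type*} [Field F] {n k : ℕ} (f : Fin k → Fin n) :
    sgs F f = ((Int.sign (Matrix.vandermonde (fun i => ((f i : ℕ) : ℤ))).det : ℤ) : F) := by
  rw [Matrix.det_vandermonde]
  let φ : ℤ →* F :=
    { toFun := fun x => ((Int.sign x : ℤ) : F)
      map_one' := by simp
      map_mul' := fun x y => by simp }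
  have h : ∀ x : ℤ, ((Int.sign x : ℤ) : F) = φ x := fun _ => rfl
  rw [h, map_prod]
  simp only [map_prod]
  rfl

lemma sgs_cons {F : Type*} [Field F] {n k : ℕ} (a : Fin n) (f : Fin k → Fin n) :
    sgs F (Fin.cons a f : Fin (k + 1) → Fin n) = (∏ j, sg F a (f j)) * sgs F f := by
  rw [sgs, Fin.prod_univ_succ, Fin.prod_Ioi_zero]
  simp only [Fin.prod_Ioi_succ, Fin.cons_zero, Fin.cons_succ]
  rfl

lemma sgs_perm {F : Type*} [Field F] {n k : ℕ} (f : Fin k → Fin n) (σ : Equiv.Perm (Fin k)) :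
    sgs F (f ∘ σ) = ((Equiv.Perm.sign σ : ℤ) : F) * sgs F f := by
  rw [sgs_eq, sgs_eq]
  have : (Matrix.vandermonde (fun i => (((f ∘ σ) i : ℕ) : ℤ))) =
      (Matrix.vandermonde (fun i => ((f i : ℕ) : ℤ))).submatrix σ id := rfl
  rw [this, Matrix.det_permute, Int.sign_mul]
  rcases Int.units_eq_one_or (Equiv.Perm.sign σ) with h | h <;> simp [h]

lemma sgs_ne_zero {F : Type*} [Field F] {n k : ℕ} (f : Fin k → Fin n)
    (hf : Function.Injective f) : sgs F f ≠ 0 := by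
  rw [sgs]
  refine Finset.prod_ne_zero_iff.2 fun i _ => Finset.prod_ne_zero_iff.2 fun j hj => ?_
  have hne : f i ≠ f j := fun h => (Finset.mem_Ioi.1 hj).ne (hf h)
  rw [sg]
  rcases lt_or_gt_of_ne hne with h | h
  · rw [Int.sign_eq_one_of_pos (by omega)]; simp
  · rw [Int.sign_eq_neg_one_of_neg (by omega)]; simp

lemma sgs_strictMono {F : Type*} [Field F] {n k : ℕ} (f : Fin k → Fin n)
    (hf : StrictMono f) : sgs F f = 1 := by
  rw [sgs]
  refine Finset.prod_eq_one fun i _ => Finset.prod_eq_one fun j hj => ?_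
  have := hf (Finset.mem_Ioi.1 hj)
  rw [sg, Int.sign_eq_one_of_pos (by omega)]; simp

lemma sgs_not_inj {F : Type*} [Field F] {n k : ℕ} (f : Fin k → Fin n)
    (hf : ¬ Function.Injective f) : sgs F f = 0 := by
  rw [sgs_eq]
  have : (Matrix.vandermonde (fun i => ((f i : ℕ) : ℤ))).det = 0 := by
    by_contra h
    rw [← ne_eq, Matrix.det_vandermonde_ne_zero_iff] at h
    exact hf fun a b hab => h (by simp [hab])
  rw [this]; simp

lemma cullisAlt_basis {F : Type*} [Field F] {n k : ℕ} (f : Fin k → Fin n) :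
    cullisAlt F n k (fun j => Pi.single (f j) 1) =
      (-1 : F) ^ (∑ j : Fin k, (j : ℕ)) * ((∏ j, (-1 : F) ^ (f j : ℕ)) * sgs F f) := by
  by_cases hf : Function.Injective f
  · -- sort
    set σ := Tuple.sort f with hσ
    have hm : StrictMono (f ∘ σ) :=
      (Tuple.monotone_sort f).strictMono_of_injective (hf.comp σ.injective)
    have h1 := cullisAlt_strictMono (F := F) _ hm
    have h2 := (cullisAlt F n k).map_perm (fun j => Pi.single (f j) 1) σ
    have h3 : ((fun j => Pi.single (f j) (1 : F)) ∘ σ : Fin k → Fin n → F)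
       = fun j => Pi.single ((f ∘ σ) j) (1 : F) := rfl
    rw [h3, h1] at h2
    have h4 := sgs_perm (F := F) f σ
    rw [sgs_strictMono _ hm] at h4
    have h5 : (∏ j, (-1 : F) ^ (f j : ℕ)) = ∏ j, (-1 : F) ^ ((f ∘ σ) j : ℕ) :=
      (Equiv.prod_comp σ (fun j => (-1 : F) ^ (f j : ℕ))).symm
    have h6 : (-1 : F) ^ (∑ j : Fin k, (((f ∘ σ) j : ℕ) - (j : ℕ))) =
        (-1 : F) ^ (∑ j : Fin k, (j : ℕ)) * ∏ j, (-1 : F) ^ ((f ∘ σ) j : ℕ) := by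
      rw [Finset.prod_pow_eq_pow_sum, ← pow_add, ← Finset.sum_add_distrib,
        ← Finset.prod_pow_eq_pow_sum, ← Finset.prod_pow_eq_pow_sum]
      refine Finset.prod_congr rfl fun j _ => ?_
      have hj : (j : ℕ) ≤ ((f ∘ σ) j : ℕ) := by
        exact strictMono_fin_le _ hm j
      obtain ⟨d, hd⟩ := Nat.exists_eq_add_of_le hj
      rw [hd, Nat.add_sub_cancel_left, ← add_assoc, pow_add, ← two_mul, pow_mul]
      simp
    rw [h5, ← mul_assoc, ← h6, h2]
    rcases Int.units_eq_one_or (Equiv.Perm.sign σ) with h | h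
    · rw [h] at h4 ⊢; simp at h4 ⊢; rw [← h4, mul_one]
    · rw [h] at h4 ⊢
      simp only [Units.val_neg, Units.val_one, Int.cast_neg, Int.cast_one, neg_mul, one_mul] at h4
      have : sgs F f = -1 := by rw [h4, neg_neg]
      rw [this]; simp
  · rw [sgs_not_inj _ hf]
    simp only [Function.Injective] at hf
    push Not at hf
    obtain ⟨a, b, hab, hne⟩ := hf
    rw [(cullisAlt F n k).map_eq_zero_of_eq _ (i := a) (j := b) (by simp [hab]) hne]
    simp

lemma sg_lt {F : Type*} [Field F] {n : ℕ} {a b : Fin n} (h : (a : ℕ) < b) : sg F a b = 1 := by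
  rw [sg, Int.sign_eq_one_of_pos (by omega)]; simp

lemma sg_gt {F : Type*} [Field F] {n : ℕ} {a b : Fin n} (h : (b : ℕ) < a) : sg F a b = -1 := by
  rw [sg, Int.sign_eq_neg_one_of_neg (by omega)]; simp

lemma sg_self {F : Type*} [Field F] {n : ℕ} (a : Fin n) : sg F a a = 0 := by
  simp [sg]

lemma sg_ne_zero {F : Type*} [Field F] {n : ℕ} {a b : Fin n} (h : a ≠ b) : sg F a b ≠ 0 := by
  rcases lt_or_gt_of_ne h with h | h
  · rw [sg_lt h]; exact one_ne_zero
  · rw [sg_gt h]; exact neg_ne_zero.2 one_ne_zero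

/-- The weight attached to a row by the rows already used. -/
def wt (F : Type*) [Field F] {n k : ℕ} (c : Fin k → Fin n) (i : Fin n) : F :=
  (-1) ^ (i : ℕ) * ∏ l, sg F i (c l)

lemma wt_ne_zero {F : Type*} [Field F] {n k : ℕ} (c : Fin k → Fin n) (i : Fin n)
    (h : ∀ l, c l ≠ i) : wt F c i ≠ 0 := by
  refine mul_ne_zero (pow_ne_zero _ (by simp)) (Finset.prod_ne_zero_iff.2 fun l _ => ?_)
  exact sg_ne_zero (h l).symm

lemma wt_succ {F : Type*} [Field F] {n k : ℕ} (c : Fin k → Fin n) (a a' : Fin n)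
    (haa : (a' : ℕ) = a + 1)
    (h : ∀ l, c l ≠ a) (h' : ∀ l, c l ≠ a') : wt F c a' = - wt F c a := by
  have : ∀ l, sg F a' (c l) = sg F a (c l) := by
    intro l
    have h1 : (c l : ℕ) ≠ a := fun e => h l (Fin.ext e)
    have h2 : (c l : ℕ) ≠ a' := fun e => h' l (Fin.ext e)
    rcases lt_or_gt_of_ne h1 with h3 | h3
    · rw [sg_gt h3, sg_gt (by omega)]
    · rw [sg_lt h3, sg_lt (by omega)]
  rw [wt, wt, haa, pow_succ]
  simp [this]

lemma cullisAlt_cons_basis {F : Type*} [Field F] {n k : ℕ} (i : Fin n) (c : Fin k → Fin n) :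
    cullisAlt F n (k + 1) (Matrix.vecCons (Pi.single i 1) (fun l => Pi.single (c l) 1)) =
      ((-1 : F) ^ (∑ j : Fin (k + 1), (j : ℕ)) * ((∏ l, (-1 : F) ^ (c l : ℕ)) * sgs F c)) *
        wt F c i := by
  have h : (Matrix.vecCons (Pi.single i 1) (fun l => Pi.single (c l) 1) :
      Fin (k + 1) → Fin n → F) =
      fun j => Pi.single ((Fin.cons i c : Fin (k + 1) → Fin n) j) 1 := by
    funext j
    refine Fin.cases ?_ (fun l => ?_) j <;> simp
  rw [h, cullisAlt_basis, sgs_cons, Fin.prod_univ_succ]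
  simp only [Fin.cons_zero, Fin.cons_succ, wt]
  ring

lemma alt_expand {F : Type*} [Field F] {n k : ℕ} (ω : (Fin n → F) [⋀^Fin (k + 1)]→ₗ[F] F)
    (m : Fin n → F) (y : Fin k → Fin n → F) :
    ω (Matrix.vecCons m y) = ∑ i, m i * ω (Matrix.vecCons (Pi.single i 1) y) := by
  have hm : m = ∑ i, m i • (Pi.single i 1 : Fin n → F) := by
    rw [pi_eq_sum_univ' m]
    simp [Pi.single_apply]
  have h := congrArg (fun z => ω.curryLeft z y) hm
  simp only [map_sum, map_smul] at h
  rw [altMap_sum_apply] at h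
  exact h

lemma alternating_count (p : ℕ → Prop) [DecidablePred p] (t : ℕ) :
    ∑ i ∈ Finset.range t, (if p i then (-1 : ℤ) ^ (Nat.count p i) else 0) =
      if Even (Nat.count p t) then 0 else 1 := by
  induction t with
  | zero => simp
  | succ t ih =>
    rw [Finset.sum_range_succ, ih, Nat.count_succ]
    by_cases hp : p t
    · simp only [hp, if_true]
      by_cases he : Even (Nat.count p t)
      · rw [if_pos he, he.neg_one_pow, if_neg (by simpa [Nat.even_add_one] using he)]; simp
      · rw [if_neg he, (Nat.not_even_iff_odd.1 he).neg_one_pow,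
          if_pos (by simpa [Nat.even_add_one] using he)]; simp
    · simp [hp]

lemma wt_eq_count {F : Type*} [Field F] {n k : ℕ} (c : Fin k → Fin n)
    (hc : Function.Injective c) (i : Fin n) (p : ℕ → Prop) [DecidablePred p]
    (hp : ∀ t, p t ↔ ∀ l, (c l : ℕ) ≠ t) :
    wt F c i = if p i then (-1 : F) ^ (Nat.count p i) else 0 := by
  classical
  split_ifs with h
  · rw [hp] at h
    have h1 : ∏ l, sg F i (c l) = (-1) ^ (Finset.univ.filter fun l => (c l : ℕ) < i).card := by
      rw [← Finset.prod_const, Finset.prod_filter]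
      refine Finset.prod_congr rfl fun l _ => ?_
      split_ifs with hl
      · exact sg_gt hl
      · exact sg_lt (by have := h l; omega)
    have h2 : (Finset.univ.filter fun l => (c l : ℕ) < i).card + Nat.count p i = i := by
      rw [Nat.count_eq_card_filter_range]
      have h3 : (Finset.univ.filter fun l => (c l : ℕ) < i).card =
          ((Finset.range i).filter fun t => ¬ p t).card := by
        refine Finset.card_bij (fun l _ => (c l : ℕ)) ?_ ?_ ?_
        · intro l hl
          simp only [Finset.mem_filter, Finset.mem_univ, true_and, Finset.mem_range] at hl ⊢
          refine ⟨hl, ?_⟩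
          rw [hp]
          push Not
          exact ⟨l, rfl⟩
        · intro a _ b _ hab
          exact hc (Fin.ext hab)
        · intro t ht
          simp only [Finset.mem_filter, Finset.mem_range, hp] at ht
          push Not at ht
          obtain ⟨ht, l, hl⟩ := ht
          exact ⟨l, by simp; omega, hl⟩
      rw [h3, add_comm, Finset.card_filter_add_card_filter_not, Finset.card_range]
    rw [wt, h1, ← pow_add]
    obtain ⟨x, hx⟩ : ∃ x, x = (Finset.univ.filter fun l => (c l : ℕ) < i).card := ⟨_, rfl⟩
    rw [← hx] at h2 ⊢
    have : (i : ℕ) + x = 2 * x + Nat.count p i := by omega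
    rw [this, pow_add, pow_mul]; simp
  · rw [hp] at h
    push Not at h
    obtain ⟨l, hl⟩ := h
    rw [wt, Finset.prod_eq_zero (Finset.mem_univ l), mul_zero]
    rw [Fin.ext hl, sg_self]

lemma wt_sum {F : Type*} [Field F] {n k : ℕ} (c : Fin k → Fin n)
    (hc : Function.Injective c) (hnk : Even (n + k)) : ∑ i, wt F c i = 0 := by
  classical
  obtain ⟨p, hp⟩ : ∃ p : ℕ → Prop, ∀ t, p t ↔ ∀ l, (c l : ℕ) ≠ t := ⟨_, fun _ => Iff.rfl⟩
  have h0 : ∀ i, wt F c i = (((if p i then (-1 : ℤ) ^ (Nat.count p i) else 0) : ℤ) : F) := by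
    intro i
    rw [wt_eq_count c hc i p hp]
    split_ifs <;> simp
  have h1 := alternating_count p n
  have h2 : k + Nat.count p n = n := by
    rw [Nat.count_eq_card_filter_range]
    have h3 : (Finset.univ : Finset (Fin k)).card =
        ((Finset.range n).filter fun t => ¬ p t).card := by
      refine Finset.card_bij (fun l _ => (c l : ℕ)) ?_ ?_ ?_
      · intro l _
        simp [hp]
      · intro a _ b _ hab
        exact hc (Fin.ext hab)
      · intro t ht
        simp only [Finset.mem_filter, Finset.mem_range, hp] at ht
        push Not at ht
        obtain ⟨ht, l, hl⟩ := ht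
        exact ⟨l, by simp, hl⟩
    have h4 := Finset.card_filter_add_card_filter_not (s := Finset.range n) (fun x => p x)
    rw [Finset.card_univ, Fintype.card_fin] at h3
    rw [Finset.card_range] at h4
    omega
  rw [if_pos (by rw [Nat.even_iff] at hnk ⊢; omega)] at h1
  simp only [h0]
  rw [← Int.cast_sum, Fin.sum_univ_eq_sum_range
    (fun i => (if p i then (-1 : ℤ) ^ (Nat.count p i) else 0)), h1]
  simp

lemma cullisAlt_cons_one {F : Type*} [Field F] {n k : ℕ} (hnk : Even (n + k))
    (y : Fin k → Fin n → F) : cullisAlt F n (k + 1) (Matrix.vecCons 1 y) = 0 := by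
  have h : (cullisAlt F n (k + 1)).curryLeft 1 = 0 := by
    refine Module.Basis.ext_alternating (Pi.basisFun F (Fin n)) fun c hc => ?_
    rw [AlternatingMap.zero_apply, AlternatingMap.curryLeft_apply_apply, alt_expand]
    simp only [Pi.basisFun_apply, cullisAlt_cons_basis, Pi.one_apply, one_mul]
    rw [← Finset.mul_sum, wt_sum c hc hnk, mul_zero]
  have := congrArg (fun z => z y) h
  exact this

lemma cullisAlt_update_one {F : Type*} [Field F] {n k : ℕ} (hnk : Odd (n + k))
    (v : Fin k → Fin n → F) (j : Fin k) : cullisAlt F n k (Function.update v j 1) = 0 := by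
  obtain ⟨k, rfl⟩ : ∃ k', k = k' + 1 := ⟨k - 1, by have := j.2; omega⟩
  have h := (cullisAlt F n (k + 1)).map_perm (Function.update v j 1) (Equiv.swap 0 j)
  have h2 : (Function.update v j 1) ∘ (Equiv.swap 0 j) =
      Matrix.vecCons 1 (fun l => (Function.update v j 1) (Equiv.swap 0 j l.succ)) := by
    funext t
    refine Fin.cases ?_ (fun l => ?_) t <;> simp
  rw [h2, cullisAlt_cons_one (by rw [Nat.even_iff]; rw [Nat.odd_iff] at hnk; omega)] at h
  rcases Int.units_eq_one_or (Equiv.Perm.sign (Equiv.swap 0 j)) with h3 | h3 <;>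
    rw [h3] at h <;> simpa using h.symm

lemma cullisAlt_add_const {F : Type*} [Field F] {n k : ℕ} (hnk : Odd (n + k))
    (v : Fin k → Fin n → F) (c : Fin k → F) :
    cullisAlt F n k (v + fun j => c j • 1) = cullisAlt F n k v := by
  rw [AlternatingMap.map_add_univ, Finset.sum_eq_single Finset.univ]
  · simp
  · intro s _ hs
    obtain ⟨j, hj⟩ : ∃ j, j ∉ s := by
      by_contra h
      push Not at h
      exact hs (Finset.eq_univ_iff_forall.2 h)
    have : s.piecewise v (fun j => c j • (1 : Fin n → F)) =
        Function.update (s.piecewise v (fun j => c j • (1 : Fin n → F))) j (c j • 1) := by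
      rw [eq_comm, Function.update_eq_self_iff]
      simp [hj]
    rw [this, AlternatingMap.map_update_smul, cullisAlt_update_one hnk, smul_zero]
  · simp

lemma cullisAlt_four {F : Type*} [Field F] {n k : ℕ} (i j p q : Fin n) (c : Fin k → Fin n) :
    cullisAlt F n (k + 4) (Matrix.vecCons (Pi.single i 1) (Matrix.vecCons (Pi.single j 1)
      (Matrix.vecCons (Pi.single p 1) (Matrix.vecCons (Pi.single q 1)
        (fun l => Pi.single (c l) 1))))) =
      ((-1 : F) ^ (∑ j : Fin (k + 4), (j : ℕ)) * ((∏ l, (-1 : F) ^ (c l : ℕ)) * sgs F c)) *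
        (wt F c i * wt F c j * wt F c p * wt F c q *
          (sg F i j * sg F i p * sg F i q * sg F j p * sg F j q * sg F p q)) := by
  have h : ∀ (k : ℕ) (a : Fin n) (f : Fin k → Fin n),
      (Matrix.vecCons (Pi.single a 1) (fun l => Pi.single (f l) 1) :
        Fin (k + 1) → Fin n → F) =
      fun j => Pi.single ((Fin.cons a f : Fin (k + 1) → Fin n) j) 1 := by
    intro k a f
    funext j
    refine Fin.cases ?_ (fun l => ?_) j <;> simp
  rw [h, h, h, h, cullisAlt_basis]
  simp only [sgs_cons, Fin.prod_univ_succ, Fin.cons_zero, Fin.cons_succ, wt]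
  ring

lemma exists_avoid {n k : ℕ} (Z : Finset (Fin n)) (hZ : Z.card ≤ 4) (h : k + 4 ≤ n) :
    ∃ c : Fin k → Fin n, Function.Injective c ∧ ∀ l, c l ∉ Z := by
  have h1 : k ≤ (Zᶜ).card := by
    rw [Finset.card_compl, Fintype.card_fin]; omega
  obtain ⟨t, ht, hc⟩ := Finset.exists_subset_card_eq h1
  refine ⟨t.orderEmbOfFin hc, (t.orderEmbOfFin hc).injective, fun l => ?_⟩
  exact Finset.mem_compl.1 (ht (Finset.orderEmbOfFin_mem t hc l))

lemma sum_delta {F : Type*} [Field F] {n : ℕ} (m : Fin n → F) (a a' : Fin n) :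
    ∑ i, m i * ((if i = a then 1 else 0) - (if i = a' then 1 else 0)) = m a - m a' := by
  simp [mul_sub]

lemma sum_delta2 {F : Type*} [Field F] {n : ℕ} (m m' : Fin n → F) (a a' b b' : Fin n) (κ : F) :
    ∑ i, m i * ∑ j, m' j * (κ *
      (((if i = a then 1 else 0) - (if i = a' then 1 else 0)) *
        ((if j = b then 1 else 0) - (if j = b' then 1 else 0)) -
       ((if i = b then 1 else 0) - (if i = b' then 1 else 0)) *
        ((if j = a then 1 else 0) - (if j = a' then 1 else 0)))) =
    κ * ((m a - m a') * (m' b - m' b') - (m b - m b') * (m' a - m' a')) := by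
  have h1 : ∀ i, ∑ j, m' j * (κ *
      (((if i = a then 1 else 0) - (if i = a' then 1 else 0)) *
        ((if j = b then 1 else 0) - (if j = b' then 1 else 0)) -
       ((if i = b then 1 else 0) - (if i = b' then 1 else 0)) *
        ((if j = a then 1 else 0) - (if j = a' then 1 else 0)))) =
      κ * (((if i = a then 1 else 0) - (if i = a' then 1 else 0)) * (m' b - m' b') -
        ((if i = b then 1 else 0) - (if i = b' then 1 else 0)) * (m' a - m' a')) := by
    intro i
    rw [← sum_delta m' b b', ← sum_delta m' a a', Finset.mul_sum, Finset.mul_sum,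
      ← Finset.sum_sub_distrib, Finset.mul_sum]
    exact Finset.sum_congr rfl fun j _ => by ring
  simp only [h1]
  rw [← sum_delta m b b', ← sum_delta m a a', Finset.sum_mul, Finset.sum_mul,
      ← Finset.sum_sub_distrib, Finset.mul_sum]
  exact Finset.sum_congr rfl fun j _ => by ring

/-- The relation obtained from a vanishing contraction. -/
lemma contraction_relation {F : Type*} [Field F] {n k : ℕ} (m m' : Fin n → F)
    (h : ∀ x : Fin (k + 2) → Fin n → F,
      cullisAlt F n (k + 4) (Matrix.vecCons m (Matrix.vecCons m' x)) = 0)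
    (c : Fin k → Fin n) (hc : Function.Injective c) (p q : Fin n) :
    ∑ i, m i * ∑ j, m' j * (wt F c i * wt F c j * wt F c p * wt F c q *
          (sg F i j * sg F i p * sg F i q * sg F j p * sg F j q * sg F p q)) = 0 := by
  have h1 := h (Matrix.vecCons (Pi.single p 1) (Matrix.vecCons (Pi.single q 1)
        (fun l => Pi.single (c l) 1)))
  rw [alt_expand] at h1
  have h2 : ∀ i : Fin n, ∀ y : Fin (k + 2) → Fin n → F,
      cullisAlt F n (k + 4) (Matrix.vecCons (Pi.single i 1) (Matrix.vecCons m' y)) =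
      ∑ j, m' j * cullisAlt F n (k + 4) (Matrix.vecCons (Pi.single i 1)
        (Matrix.vecCons (Pi.single j 1) y)) := fun i y =>
    alt_expand ((cullisAlt F n (k + 4)).curryLeft (Pi.single i 1)) m' y
  simp only [h2, cullisAlt_four] at h1
  set K := ((-1 : F) ^ (∑ j : Fin (k + 4), (j : ℕ)) *
    ((∏ l, (-1 : F) ^ (c l : ℕ)) * sgs F c)) with hK
  have hK0 : K ≠ 0 := by
    refine mul_ne_zero (pow_ne_zero _ (by simp)) (mul_ne_zero ?_ (sgs_ne_zero c hc))
    exact Finset.prod_ne_zero_iff.2 fun l _ => pow_ne_zero _ (by simp)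
  refine (mul_eq_zero.1 (?_ : K * _ = 0)).resolve_left hK0
  rw [← h1, Finset.mul_sum]
  refine Finset.sum_congr rfl fun i _ => ?_
  rw [Finset.mul_sum, Finset.mul_sum, Finset.mul_sum]
  exact Finset.sum_congr rfl fun j _ => by ring

lemma sg_adj {F : Type*} [Field F] {n : ℕ} {i a a' : Fin n} (ha : (a' : ℕ) = a + 1)
    (h : i ≠ a) (h' : i ≠ a') : sg F i a' = sg F i a := by
  have h1 : (i : ℕ) ≠ a := fun e => h (Fin.ext e)
  have h2 : (i : ℕ) ≠ a' := fun e => h' (Fin.ext e)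
  rcases lt_or_gt_of_ne h1 with h3 | h3
  · rw [sg_lt h3, sg_lt (by omega)]
  · rw [sg_gt h3, sg_gt (by omega)]

/-- Distant differences are parallel. -/
lemma contraction_far {F : Type*} [Field F] {n k : ℕ} (hn : k + 4 ≤ n) (m m' : Fin n → F)
    (h : ∀ x : Fin (k + 2) → Fin n → F,
      cullisAlt F n (k + 4) (Matrix.vecCons m (Matrix.vecCons m' x)) = 0)
    (a a' b b' : Fin n) (ha : (a' : ℕ) = a + 1) (hb : (b' : ℕ) = b + 1) (hab : (a' : ℕ) < b) :
    (m a - m a') * (m' b - m' b') - (m b - m b') * (m' a - m' a') = 0 := by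
  classical
  obtain ⟨c, hc, hcZ⟩ := exists_avoid ({a, a', b, b'} : Finset (Fin n)) Finset.card_le_four hn
  simp only [Finset.mem_insert, Finset.mem_singleton, not_or] at hcZ
  have wa := wt_ne_zero (F := F) c a fun l => (hcZ l).1
  have wb := wt_ne_zero (F := F) c b fun l => (hcZ l).2.2.1
  have wa' := wt_succ (F := F) c a a' ha (fun l => (hcZ l).1) (fun l => (hcZ l).2.1)
  have wb' := wt_succ (F := F) c b b' hb (fun l => (hcZ l).2.2.1) (fun l => (hcZ l).2.2.2)
  have H1 := contraction_relation m m' h c hc a b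
  have H2 := contraction_relation m m' h c hc a' b
  have H3 := contraction_relation m m' h c hc a b'
  have H4 := contraction_relation m m' h c hc a' b'
  have e1 : sg F a b = 1 := sg_lt (by omega)
  have e2 : sg F a' b = 1 := sg_lt (by omega)
  have e3 : sg F a b' = 1 := sg_lt (by omega)
  have e4 : sg F a' b' = 1 := sg_lt (by omega)
  have e5 : sg F a a' = 1 := sg_lt (by omega)
  have e6 : sg F b b' = 1 := sg_lt (by omega)
  have f1 : sg F b a = -1 := sg_gt (by omega)
  have f2 : sg F b a' = -1 := sg_gt (by omega)
  have f3 : sg F b' a = -1 := sg_gt (by omega)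
  have f4 : sg F b' a' = -1 := sg_gt (by omega)
  have f5 : sg F a' a = -1 := sg_gt (by omega)
  have f6 : sg F b' b = -1 := sg_gt (by omega)
  have n1 : a ≠ b := fun e => by rw [e] at ha; omega
  have n2 : a ≠ b' := fun e => by rw [e] at ha; omega
  have n3 : a' ≠ b := fun e => by rw [e] at hab; omega
  have n4 : a' ≠ b' := fun e => by rw [e] at hab; omega
  have n5 : a ≠ a' := fun e => by rw [e] at ha; omega
  have n6 : b ≠ b' := fun e => by rw [e] at hb; omega
  have tri : ∀ i, i = a ∨ i = a' ∨ i = b ∨ i = b' ∨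
      (i ≠ a ∧ i ≠ a' ∧ i ≠ b ∧ i ≠ b') := by
    intro i; tauto
  have hp : ∀ i j, (-((wt F c a * wt F c b) * (wt F c a * wt F c b))) *
      (((if i = a then 1 else 0) - (if i = a' then 1 else 0)) *
        ((if j = b then 1 else 0) - (if j = b' then 1 else 0)) -
       ((if i = b then 1 else 0) - (if i = b' then 1 else 0)) *
        ((if j = a then 1 else 0) - (if j = a' then 1 else 0))) =
      wt F c i * wt F c j * wt F c a * wt F c b *
          (sg F i j * sg F i a * sg F i b * sg F j a * sg F j b * sg F a b) +
      wt F c i * wt F c j * wt F c a' * wt F c b *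
          (sg F i j * sg F i a' * sg F i b * sg F j a' * sg F j b * sg F a' b) +
      wt F c i * wt F c j * wt F c a * wt F c b' *
          (sg F i j * sg F i a * sg F i b' * sg F j a * sg F j b' * sg F a b') +
      wt F c i * wt F c j * wt F c a' * wt F c b' *
          (sg F i j * sg F i a' * sg F i b' * sg F j a' * sg F j b' * sg F a' b') := by
    intro i j
    rw [e1, e2, e3, e4]
    rcases tri i with h1 | h1 | h1 | h1 | ⟨i1, i2, i3, i4⟩
    · rw [h1]
      rcases tri j with h2 | h2 | h2 | h2 | ⟨j1, j2, j3, j4⟩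
      · rw [h2]; simp [sg_self, n1, n2, n5]
      · rw [h2]; simp [sg_self, n1, n2, n3, n4, n5.symm]
      · rw [h2]; simp [*, sg_self, n1.symm, n2.symm, n3.symm, n6]; try ring
      · rw [h2]; simp [*, sg_self, n1.symm, n2.symm, n4.symm, n6.symm]; try ring
      · rw [sg_adj hb j3 j4, wa', wb']; simp [*, sg_self]; try ring
    · rw [h1]
      rcases tri j with h2 | h2 | h2 | h2 | ⟨j1, j2, j3, j4⟩
      · rw [h2]; simp [*, sg_self, n5.symm]; try ring
      · rw [h2]; simp [*, sg_self, n5.symm]; try ring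
      · rw [h2]; simp [*, sg_self, n1.symm, n2.symm, n3.symm, n5.symm]; try ring
      · rw [h2]; simp [*, sg_self, n1.symm, n2.symm, n4.symm, n6.symm, n5.symm]; try ring
      · rw [sg_adj hb j3 j4, wa', wb']; simp [*, sg_self, n5.symm]; try ring
    · rw [h1]
      rcases tri j with h2 | h2 | h2 | h2 | ⟨j1, j2, j3, j4⟩
      · rw [h2]; simp [*, sg_self, n1.symm, n3.symm]; try ring
      · rw [h2]; simp [*, sg_self, n1.symm, n3.symm, n5.symm]; try ring
      · rw [h2]; simp [*, sg_self, n1.symm, n2.symm, n3.symm, n5.symm]; try ring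
      · rw [h2]; simp [*, sg_self, n1.symm, n2.symm, n3.symm, n4.symm, n6.symm, n5.symm]; try ring
      · rw [sg_adj ha j1 j2, wa', wb']; simp [*, sg_self, n1.symm, n3.symm]; try ring
    · rw [h1]
      rcases tri j with h2 | h2 | h2 | h2 | ⟨j1, j2, j3, j4⟩
      · rw [h2]; simp [*, sg_self, n2.symm, n4.symm, n6.symm]; try ring
      · rw [h2]; simp [*, sg_self, n2.symm, n4.symm, n6.symm, n5.symm]; try ring
      · rw [h2]; simp [*, sg_self, n1.symm, n2.symm, n3.symm, n4.symm, n6.symm]; try ring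
      · rw [h2]; simp [*, sg_self, n1.symm, n2.symm, n3.symm, n4.symm, n6.symm, n5.symm]; try ring
      · rw [sg_adj ha j1 j2, wa', wb']; simp [*, sg_self, n2.symm, n4.symm, n6.symm]; try ring
    · rcases tri j with h2 | h2 | h2 | h2 | ⟨j1, j2, j3, j4⟩
      · rw [sg_adj hb i3 i4, h2, wa', wb', e1, e3]; simp [*]; try ring
      · rw [sg_adj hb i3 i4, h2, wa', wb', e2, e4]; simp [*]; try ring
      · rw [sg_adj ha i1 i2, h2, wa', wb', f1, f2]; simp [*]; try ring
      · rw [sg_adj ha i1 i2, h2, wa', wb', f3, f4]; simp [*]; try ring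
      · rw [sg_adj hb i3 i4, sg_adj ha i1 i2, sg_adj ha j1 j2, wa', wb']; simp [*]; try ring
  refine (mul_eq_zero.1 (?_ : (-((wt F c a * wt F c b) * (wt F c a * wt F c b))) *
    _ = 0)).resolve_left (neg_ne_zero.2 (mul_ne_zero (mul_ne_zero wa wb) (mul_ne_zero wa wb)))
  rw [← sum_delta2 m m' a a' b b']
  simp only [hp, mul_add, Finset.sum_add_distrib]
  rw [H1, H2, H3, H4]; simp

/-- Adjacent differences: the two neighbouring minors agree. -/
lemma contraction_near {F : Type*} [Field F] {n k : ℕ} (hn : k + 4 ≤ n) (m m' : Fin n → F)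
    (h : ∀ x : Fin (k + 2) → Fin n → F,
      cullisAlt F n (k + 4) (Matrix.vecCons m (Matrix.vecCons m' x)) = 0)
    (a a' b b' : Fin n) (hb : (a : ℕ) = b + 1) (ha : (a' : ℕ) = a + 1)
    (hb' : (b' : ℕ) = a' + 1) :
    (m a - m a') * (m' b - m' b') - (m b - m b') * (m' a - m' a') = 0 := by
  classical
  obtain ⟨c, hc, hcZ⟩ := exists_avoid ({a, a', b, b'} : Finset (Fin n)) Finset.card_le_four hn
  simp only [Finset.mem_insert, Finset.mem_singleton, not_or] at hcZ
  have wb := wt_ne_zero (F := F) c b fun l => (hcZ l).2.2.1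
  have wa := wt_succ (F := F) c b a hb (fun l => (hcZ l).2.2.1) (fun l => (hcZ l).1)
  have wa' := wt_succ (F := F) c a a' ha (fun l => (hcZ l).1) (fun l => (hcZ l).2.1)
  have wb' := wt_succ (F := F) c a' b' hb' (fun l => (hcZ l).2.1) (fun l => (hcZ l).2.2.2)
  rw [wa, neg_neg] at wa'
  rw [wa'] at wb'
  have H1 := contraction_relation m m' h c hc a b
  have H2 := contraction_relation m m' h c hc a' b
  have H3 := contraction_relation m m' h c hc a b'
  have H4 := contraction_relation m m' h c hc a' b'
  have e1 : sg F b a = 1 := sg_lt (by omega)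
  have e2 : sg F b a' = 1 := sg_lt (by omega)
  have e3 : sg F a b' = 1 := sg_lt (by omega)
  have e4 : sg F a' b' = 1 := sg_lt (by omega)
  have e5 : sg F a a' = 1 := sg_lt (by omega)
  have e6 : sg F b b' = 1 := sg_lt (by omega)
  have f1 : sg F a b = -1 := sg_gt (by omega)
  have f2 : sg F a' b = -1 := sg_gt (by omega)
  have f3 : sg F b' a = -1 := sg_gt (by omega)
  have f4 : sg F b' a' = -1 := sg_gt (by omega)
  have f5 : sg F a' a = -1 := sg_gt (by omega)
  have f6 : sg F b' b = -1 := sg_gt (by omega)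
  have n1 : a ≠ b := fun e => by rw [e] at hb; omega
  have n2 : a ≠ b' := fun e => by rw [← e] at hb'; omega
  have n3 : a' ≠ b := fun e => by rw [e] at ha; omega
  have n4 : a' ≠ b' := fun e => by rw [e] at hb'; omega
  have n5 : a ≠ a' := fun e => by rw [e] at ha; omega
  have n6 : b ≠ b' := fun e => by rw [← e] at hb'; omega
  have n1' := n1.symm
  have n2' := n2.symm
  have n3' := n3.symm
  have n4' := n4.symm
  have n5' := n5.symm
  have n6' := n6.symm
  have tri : ∀ i, i = a ∨ i = a' ∨ i = b ∨ i = b' ∨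
      (i ≠ a ∧ i ≠ a' ∧ i ≠ b ∧ i ≠ b') := by
    intro i; tauto
  have hp : ∀ i j, (-((wt F c b * wt F c b) * (wt F c b * wt F c b))) *
      (((if i = a then 1 else 0) - (if i = a' then 1 else 0)) *
        ((if j = b then 1 else 0) - (if j = b' then 1 else 0)) -
       ((if i = b then 1 else 0) - (if i = b' then 1 else 0)) *
        ((if j = a then 1 else 0) - (if j = a' then 1 else 0))) =
      wt F c i * wt F c j * wt F c a * wt F c b *
          (sg F i j * sg F i a * sg F i b * sg F j a * sg F j b * sg F a b) +
      wt F c i * wt F c j * wt F c a' * wt F c b *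
          (sg F i j * sg F i a' * sg F i b * sg F j a' * sg F j b * sg F a' b) +
      wt F c i * wt F c j * wt F c a * wt F c b' *
          (sg F i j * sg F i a * sg F i b' * sg F j a * sg F j b' * sg F a b') +
      wt F c i * wt F c j * wt F c a' * wt F c b' *
          (sg F i j * sg F i a' * sg F i b' * sg F j a' * sg F j b' * sg F a' b') := by
    intro i j
    rw [f1, f2, e3, e4, wa, wa', wb']
    clear H1 H2 H3 H4 h hcZ
    rcases tri i with h1 | h1 | h1 | h1 | ⟨i1, i2, i3, i4⟩ <;>
      rcases tri j with h2 | h2 | h2 | h2 | ⟨j1, j2, j3, j4⟩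
    all_goals first
      | rw [sg_adj hb' i2 i4, sg_adj ha i1 i2, sg_adj hb i3 i1,
          sg_adj hb' j2 j4, sg_adj ha j1 j2, sg_adj hb j3 j1]
      | rw [sg_adj hb' i2 i4, sg_adj ha i1 i2, sg_adj hb i3 i1, h2]
      | rw [sg_adj hb' j2 j4, sg_adj ha j1 j2, sg_adj hb j3 j1, h1]
      | rw [h1, h2]
    all_goals simp [*, sg_self]
    all_goals try ring
  refine (mul_eq_zero.1 (?_ : (-((wt F c b * wt F c b) * (wt F c b * wt F c b))) *
    _ = 0)).resolve_left (neg_ne_zero.2 (mul_ne_zero (mul_ne_zero wb wb) (mul_ne_zero wb wb)))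
  rw [← sum_delta2 m m' a a' b b']
  simp only [hp, mul_add, Finset.sum_add_distrib]
  rw [H1, H2, H3, H4]; simp

/-- All minors of consecutive differences vanish. -/
lemma contraction_all {F : Type*} [Field F] {n k : ℕ} (hn : k + 4 ≤ n) (hn5 : 5 ≤ n)
    (m m' : Fin n → F)
    (h : ∀ x : Fin (k + 2) → Fin n → F,
      cullisAlt F n (k + 4) (Matrix.vecCons m (Matrix.vecCons m' x)) = 0)
    (a a' b b' : Fin n) (ha : (a' : ℕ) = a + 1) (hb : (b' : ℕ) = b + 1) :
    (m a - m a') * (m' b - m' b') - (m b - m b') * (m' a - m' a') = 0 := by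
  obtain ⟨M, hM⟩ : ∃ M : ℕ → F, ∀ i : Fin n, M i = m i :=
    ⟨fun i => if h : i < n then m ⟨i, h⟩ else 0, fun i => by simp⟩
  obtain ⟨M', hM'⟩ : ∃ M' : ℕ → F, ∀ i : Fin n, M' i = m' i :=
    ⟨fun i => if h : i < n then m' ⟨i, h⟩ else 0, fun i => by simp⟩
  have far : ∀ a b, a + 1 < b → b + 1 < n →
      (M a - M (a + 1)) * (M' b - M' (b + 1)) - (M b - M (b + 1)) * (M' a - M' (a + 1)) = 0 := by
    intro a b hab hb
    have := contraction_far hn m m' h ⟨a, by omega⟩ ⟨a + 1, by omega⟩ ⟨b, by omega⟩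
      ⟨b + 1, by omega⟩ rfl rfl hab
    simpa only [← hM, ← hM'] using this
  have near : ∀ a, a + 3 < n →
      (M (a + 1) - M (a + 2)) * (M' a - M' (a + 3)) -
        (M a - M (a + 3)) * (M' (a + 1) - M' (a + 2)) = 0 := by
    intro a hb
    have := contraction_near hn m m' h ⟨a + 1, by omega⟩ ⟨a + 2, by omega⟩ ⟨a, by omega⟩
      ⟨a + 3, by omega⟩ rfl rfl rfl
    simpa only [← hM, ← hM'] using this
  have adj : ∀ a, a + 2 < n →
      (M a - M (a + 1)) * (M' (a + 1) - M' (a + 2)) -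
        (M (a + 1) - M (a + 2)) * (M' a - M' (a + 1)) = 0 := by
    intro a
    induction a with
    | zero =>
      intro _
      have n0 := near 0 (by omega)
      have n1 := near 1 (by omega)
      have f02 := far 0 2 (by omega) (by omega)
      have f03 := far 0 3 (by omega) (by omega)
      norm_num at n0 n1 f02 f03 ⊢
      refine pow_eq_zero_iff (n := 2) (by norm_num) |>.1 ?_
      generalize M 0 = x0 at *
      generalize M 1 = x1 at *
      generalize M 2 = x2 at *
      generalize M 3 = x3 at *
      generalize M 4 = x4 at *
      generalize M' 0 = y0 at *
      generalize M' 1 = y1 at *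
      generalize M' 2 = y2 at *
      generalize M' 3 = y3 at *
      generalize M' 4 = y4 at *
      -- Plücker relation for the first four differences
      have c12 : (x1 - x2) * (y2 - y3) - (x2 - x3) * (y1 - y2) =
          (x0 - x1) * (y1 - y2) - (x1 - x2) * (y0 - y1) := by
        linear_combination n0
      have c23 : (x2 - x3) * (y3 - y4) - (x3 - x4) * (y2 - y3) =
          (x1 - x2) * (y2 - y3) - (x2 - x3) * (y1 - y2) := by
        linear_combination n1
      have pl : ((x0 - x1) * (y1 - y2) - (x1 - x2) * (y0 - y1)) *
          ((x2 - x3) * (y3 - y4) - (x3 - x4) * (y2 - y3)) = 0 := by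
        linear_combination ((x1 - x2) * (y3 - y4) - (x3 - x4) * (y1 - y2)) * f02 -
          ((x1 - x2) * (y2 - y3) - (x2 - x3) * (y1 - y2)) * f03
      rw [c23, c12] at pl
      rw [sq]
      exact pl
    | succ a ih =>
      intro ha
      have i1 := ih (by omega)
      have i2 := near a (by omega)
      rw [show a + 1 + 1 = a + 2 from rfl, show a + 1 + 2 = a + 3 from rfl]
      linear_combination i1 + i2
  have all : ∀ a b, a ≤ b → b + 1 < n →
      (M a - M (a + 1)) * (M' b - M' (b + 1)) - (M b - M (b + 1)) * (M' a - M' (a + 1)) = 0 := by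
    intro a b hab hb
    rcases Nat.lt_or_ge (a + 1) b with h1 | h1
    · exact far a b h1 hb
    · rcases Nat.lt_or_ge a b with h2 | h2
      · obtain rfl : b = a + 1 := by omega
        exact adj a hb
      · obtain rfl : b = a := by omega
        ring
  have ha2 := a'.2
  have hb2 := b'.2
  rw [← hM a, ← hM a', ← hM b, ← hM b', ← hM' a, ← hM' a', ← hM' b, ← hM' b', ha, hb]
  rcases le_total (a : ℕ) b with h1 | h1
  · exact all _ _ h1 (by omega)
  · have := all _ _ h1 (by omega)
    linear_combination -this

/-- A vanishing contraction forces linear dependence modulo constant vectors. -/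
lemma contraction_dependent {F : Type*} [Field F] {n k : ℕ} (hn : k + 4 ≤ n + 1) (hn5 : 5 ≤ n + 1)
    (m m' : Fin n → F)
    (h : ∀ x : Fin (k + 2) → Fin (n + 1) → F,
      cullisAlt F (n + 1) (k + 4)
        (Matrix.vecCons (Fin.cons 0 m) (Matrix.vecCons (Fin.cons 0 m') x)) = 0) :
    ¬ LinearIndependent F ![m, m'] := by
  intro hli
  have hall := contraction_all hn hn5 _ _ h
  have hconst : ∀ (s t : F), (∀ i : Fin n,
      s * ((Fin.cons 0 m : Fin (n + 1) → F) i.castSucc - (Fin.cons 0 m : Fin (n + 1) → F) i.succ) +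
      t * ((Fin.cons 0 m' : Fin (n + 1) → F) i.castSucc -
        (Fin.cons 0 m' : Fin (n + 1) → F) i.succ) = 0) → s = 0 ∧ t = 0 := by
    intro s t hst
    apply (LinearIndependent.pair_iff.1 hli) s t
    have hz : ∀ i : Fin (n + 1), s * (Fin.cons 0 m : Fin (n + 1) → F) i +
        t * (Fin.cons 0 m' : Fin (n + 1) → F) i = 0 := by
      intro i
      induction i using Fin.induction with
      | zero => simp
      | succ i ih => linear_combination ih - hst i
    funext i
    have := hz i.succ
    simpa using this
  by_cases h0 : ∀ i : Fin n, (Fin.cons 0 m' : Fin (n + 1) → F) i.castSucc -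
        (Fin.cons 0 m' : Fin (n + 1) → F) i.succ = 0
  · have := hconst 0 1 (fun i => by rw [h0 i]; simp)
    simp at this
  · push Not at h0
    obtain ⟨i, hi⟩ := h0
    have := hconst ((Fin.cons 0 m' : Fin (n + 1) → F) i.castSucc -
      (Fin.cons 0 m' : Fin (n + 1) → F) i.succ) (-((Fin.cons 0 m : Fin (n + 1) → F) i.castSucc -
      (Fin.cons 0 m : Fin (n + 1) → F) i.succ)) (fun j => by
        have := hall j.castSucc j.succ i.castSucc i.succ (by simp) (by simp)
        linear_combination this)
    exact hi this.1

/-- Embedding by a zero first coordinate. -/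
def consZero (F : Type*) [Field F] (N : ℕ) : (Fin N → F) →ₗ[F] (Fin (N + 1) → F) where
  toFun v := Fin.cons 0 v
  map_add' v w := by
    funext i; refine Fin.cases ?_ (fun l => ?_) i <;> simp
  map_smul' c v := by
    funext i; refine Fin.cases ?_ (fun l => ?_) i <;> simp

/-- Projection modulo constant vectors. -/
def modOne (F : Type*) [Field F] (N : ℕ) : (Fin (N + 1) → F) →ₗ[F] (Fin N → F) where
  toFun x i := x i.succ - x 0
  map_add' v w := by
    funext i; simp; ring
  map_smul' c v := by
    funext i; simp; ring

lemma modOne_consZero {F : Type*} [Field F] {N : ℕ} (v : Fin N → F) :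
    modOne F N (consZero F N v) = v := by
  funext i; simp [modOne, consZero]

lemma consZero_modOne {F : Type*} [Field F] {N : ℕ} (x : Fin (N + 1) → F) :
    x = consZero F N (modOne F N x) + x 0 • 1 := by
  funext i; refine Fin.cases ?_ (fun l => ?_) i <;> simp [modOne, consZero]

lemma modOne_eq_zero {F : Type*} [Field F] {N : ℕ} (x : Fin (N + 1) → F)
    (h : modOne F N x = 0) (i : Fin (N + 1)) : x i = x 0 := by
  refine Fin.cases rfl (fun l => ?_) i
  have := congrFun h l
  simpa [modOne, sub_eq_zero] using this

lemma modOne_const {F : Type*} [Field F] {N : ℕ} (x : Fin (N + 1) → F)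
    (h : ∀ i, x i = x 0) : modOne F N x = 0 := by
  funext i; simp [modOne, h i.succ]

/-- The induced form on the quotient by constant vectors. -/
noncomputable def redForm (F : Type*) [Field F] (N k : ℕ) : (Fin N → F) [⋀^Fin k]→ₗ[F] F :=
  (cullisAlt F (N + 1) k).compLinearMap (consZero F N)

lemma redForm_modOne {F : Type*} [Field F] {N k : ℕ} (hodd : Odd (N + 1 + k))
    (x : Fin k → Fin (N + 1) → F) :
    redForm F N k (fun j => modOne F N (x j)) = cullisAlt F (N + 1) k x := by
  have := cullisAlt_add_const hodd (fun j => consZero F N (modOne F N (x j))) (fun j => x j 0)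
  have h2 : ((fun j => consZero F N (modOne F N (x j))) + fun j => (x j 0) • 1) = x := by
    funext j
    exact (consZero_modOne (x j)).symm
  rw [h2] at this
  rw [this]; rfl

lemma redForm_nondeg {F : Type*} [Field F] {N k : ℕ} (hk : 4 ≤ k) (hn : k + 2 ≤ N + 1)
    (hodd : Odd (N + 1 + k)) (m₁ m₂ : Fin N → F) (hli : LinearIndependent F ![m₁, m₂])
    (i j : Fin k) (hij : i ≠ j) :
    ∃ x : Fin k → (Fin N → F),
      redForm F N k (Function.update (Function.update x i m₁) j m₂) ≠ 0 := by
  obtain ⟨k, rfl⟩ : ∃ k', k = k' + 4 := ⟨k - 4, by omega⟩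
  by_contra hcon
  push Not at hcon
  refine contraction_dependent (k := k) (by omega) (by omega) m₁ m₂ (fun x => ?_) hli
  obtain ⟨σ, h0, h1⟩ : ∃ σ : Equiv.Perm (Fin (k + 4)), σ 0 = i ∧ σ 1 = j := by
    refine ⟨Equiv.swap 0 i * Equiv.swap 1 (Equiv.swap 0 i j), ?_, ?_⟩
    · rw [Equiv.Perm.mul_apply, Equiv.swap_apply_of_ne_of_ne (a := 1) (x := 0)]
      · simp
      · simp
      · intro h
        have := congrArg (Equiv.swap 0 i) h
        simp at this
        exact hij this
    · simp
  set y : Fin (k + 4) → Fin (N + 1) → F :=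
    Matrix.vecCons (Fin.cons 0 m₁) (Matrix.vecCons (Fin.cons 0 m₂) x) with hy
  have hy0 : modOne F N (y 0) = m₁ := modOne_consZero m₁
  have hy1 : modOne F N (y 1) = m₂ := modOne_consZero m₂
  rw [← redForm_modOne hodd]
  set z : Fin (k + 4) → Fin N → F := fun l => modOne F N (y l) with hz
  have h3 := (redForm F N (k + 4)).map_perm z σ.symm
  have h4 : z ∘ σ.symm = Function.update (Function.update (z ∘ σ.symm) i m₁) j m₂ := by
    rw [eq_comm, Function.update_eq_iff]
    constructor
    · rw [← h1]; simp [hz, hy1]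
    · intro l _
      by_cases hl : l = i
      · subst hl; rw [Function.update_self, ← h0]; simp [hz, hy0]
      · rw [Function.update_of_ne hl]
  rw [h4, hcon] at h3
  rcases Int.units_eq_one_or (Equiv.Perm.sign σ.symm) with h5 | h5 <;>
    rw [h5] at h3 <;> simpa using h3.symm

lemma cullisDet_finset {F : Type*} [Field F] {n k : ℕ} (d : Finset (Fin n)) (hd : d.card = k) :
    cullisAlt F n k (fun j => Pi.single (d.orderEmbOfFin hd j) 1) =
      (-1 : F) ^ ((∑ i ∈ d, (i : ℕ)) - ∑ j : Fin k, (j : ℕ)) := by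
  rw [cullisAlt_strictMono _ (d.orderEmbOfFin hd).strictMono,
    Finset.sum_tsub_distrib _ (fun j _ => strictMono_fin_le _ (d.orderEmbOfFin hd).strictMono j)]
  congr 2
  conv_rhs => rw [← Finset.image_orderEmbOfFin_univ d hd]
  rw [Finset.sum_image]
  intro a _ b _ h
  exact (d.orderEmbOfFin hd).injective h

/-- Conditions on minors determine the transformed form. -/
lemma cullisDet_mul_left {F : Type*} [Field F] {n k : ℕ} (A : Matrix (Fin n) (Fin n) F) (b : F)
    (h : ∀ (d : Finset (Fin n)) (hd : d.card = k),
          cullisDet (A.submatrix id (fun j => d.orderEmbOfFin hd j)) * b =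
            (-1 : F) ^ ((∑ i ∈ d, (i : ℕ)) - ∑ j : Fin k, (j : ℕ)))
    (X : Matrix (Fin n) (Fin k) F) : cullisDet (A * X) * b = cullisDet X := by
  have key : b • (cullisAlt F n k).compLinearMap A.mulVecLin = cullisAlt F n k := by
    refine Module.Basis.ext_alternating (Pi.basisFun F (Fin n)) (fun f hf => ?_)
    set σ := Tuple.sort f with hσ
    have hmono : StrictMono (f ∘ σ) :=
      (Tuple.monotone_sort f).strictMono_of_injective (hf.comp σ.injective)
    have hmain : (b • (cullisAlt F n k).compLinearMap A.mulVecLin)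
        ((fun i => Pi.basisFun F (Fin n) (f i)) ∘ σ) =
        cullisAlt F n k ((fun i => Pi.basisFun F (Fin n) (f i)) ∘ σ) := by
      have hd : (Finset.univ.image (f ∘ σ)).card = k := by
        rw [Finset.card_image_of_injective _ hmono.injective]; simp
      have hg : f ∘ σ = (Finset.univ.image (f ∘ σ)).orderEmbOfFin hd :=
        Finset.orderEmbOfFin_unique hd (fun x => by simp) hmono
      have e1 : (fun i => Pi.basisFun F (Fin n) (f i)) ∘ σ =
          fun j => Pi.single ((Finset.univ.image (f ∘ σ)).orderEmbOfFin hd j) 1 := by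
        funext j
        rw [← hg]; simp
      rw [e1, cullisDet_finset, ← h _ hd, AlternatingMap.smul_apply, smul_eq_mul, mul_comm b,
        AlternatingMap.compLinearMap_apply, cullisDet_eq]
      congr 2
      funext j i
      simp
    rw [AlternatingMap.map_perm, AlternatingMap.map_perm] at hmain
    exact smul_left_cancel _ hmain
  have := congrArg (fun g => g (fun j i => X i j)) key
  rw [cullisDet_eq X, cullisDet_eq]
  simp only [AlternatingMap.smul_apply, smul_eq_mul, AlternatingMap.compLinearMap_apply] at this
  rw [← this, mul_comm]
  rfl

lemma cullisDet_modOne {F : Type*} [Field F] {N k : ℕ} (hodd : Odd (N + 1 + k))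
    (X : Matrix (Fin (N + 1)) (Fin k) F) :
    cullisDet X = redForm F N k (fun j => modOne F N (fun i => X i j)) := by
  rw [cullisDet_eq, redForm_modOne hodd]

lemma cullisDet_congr {F : Type*} [Field F] {N k : ℕ} (hodd : Odd (N + 1 + k))
    (X Y : Matrix (Fin (N + 1)) (Fin k) F)
    (h : ∀ j, modOne F N (fun i => X i j) = modOne F N (fun i => Y i j)) :
    cullisDet X = cullisDet Y := by
  rw [cullisDet_modOne hodd, cullisDet_modOne hodd]
  congr 1
  funext j
  exact h j

/-- Columns modulo constants. -/
def colsMod (F : Type*) [Field F] (N k : ℕ) :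
    Matrix (Fin (N + 1)) (Fin k) F →ₗ[F] (Fin k → Fin N → F) where
  toFun X j := modOne F N (fun i => X i j)
  map_add' X Y := by
    funext j; exact (modOne F N).map_add (fun i => X i j) (fun i => Y i j)
  map_smul' c X := by
    funext j; exact (modOne F N).map_smul c (fun i => X i j)

/-- Lifting of reduced columns. -/
def colsLift (F : Type*) [Field F] (N k : ℕ) :
    (Fin k → Fin N → F) →ₗ[F] Matrix (Fin (N + 1)) (Fin k) F where
  toFun x := Matrix.of fun i j => consZero F N (x j) i
  map_add' X Y := by
    ext i j; simp
  map_smul' c X := by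
    ext i j; simp

lemma colsMod_colsLift {F : Type*} [Field F] {N k : ℕ} (x : Fin k → Fin N → F) :
    colsMod F N k (colsLift F N k x) = x := by
  funext j
  exact modOne_consZero (x j)

lemma preserver_forward {F : Type*} [Field F] {N k : ℕ} (hk : 4 ≤ k) (hn : k + 2 ≤ N + 1)
    (hodd : Odd (N + 1 + k)) (hF : (k : Cardinal) < Cardinal.mk F)
    (T : Matrix (Fin (N + 1)) (Fin k) F →ₗ[F] Matrix (Fin (N + 1)) (Fin k) F)
    (hT : ∀ X, cullisDet (T X) = cullisDet X) :
    ∃ (A : Matrix (Fin (N + 1)) (Fin (N + 1)) F) (B : Matrix (Fin k) (Fin k) F),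
      ∀ X, colsMod F N k (T X) = colsMod F N k (A * X * B) := by
  have hdet : ∀ X : Matrix (Fin (N + 1)) (Fin k) F,
      cullisDet X = redForm F N k (colsMod F N k X) := cullisDet_modOne hodd
  have hfin : k < Module.finrank F (Fin N → F) := by
    rw [Module.finrank_fin_fun]
    omega
  obtain ⟨hrad, hS⟩ := abstract_preserver (by omega) hfin hF (redForm F N k)
    (fun m₁ m₂ h i j hij => redForm_nondeg hk hn hodd m₁ m₂ h i j hij)
  set S : (Fin k → Fin N → F) →ₗ[F] (Fin k → Fin N → F) :=
    (colsMod F N k) ∘ₗ T ∘ₗ (colsLift F N k) with hSdef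
  have hSx : ∀ x, S x = colsMod F N k (T (colsLift F N k x)) := fun x => rfl
  have hSp : ∀ x, redForm F N k (S x) = redForm F N k x := by
    intro x
    rw [hSx, ← hdet, hT, hdet, colsMod_colsLift]
  obtain ⟨hbij, A₀, B, hAB⟩ := hS S hSp
  have hker : ∀ W : Matrix (Fin (N + 1)) (Fin k) F, colsMod F N k W = 0 →
      colsMod F N k (T W) = 0 := by
    intro W hW
    obtain ⟨y, hy⟩ := hbij.2 (colsMod F N k (T W))
    have hy0 : y = 0 := by
      apply hrad
      intro X t
      rw [← hSp (X + t • y), map_add, map_smul, hy, hSx, ← map_smul, ← map_add, ← map_smul,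
        ← map_add, ← hdet, hT, hdet, map_add, map_smul, hW, smul_zero, add_zero,
        colsMod_colsLift]
    rw [← hy, hy0, map_zero]
  have hred : ∀ X, colsMod F N k (T X) = S (colsMod F N k X) := by
    intro X
    have := hker (X - colsLift F N k (colsMod F N k X)) (by
      rw [map_sub, colsMod_colsLift, sub_self])
    rw [map_sub, map_sub, sub_eq_zero] at this
    rw [this, hSx]
  refine ⟨LinearMap.toMatrix' (consZero F N ∘ₗ A₀ ∘ₗ modOne F N), B, fun X => ?_⟩
  rw [hred]
  funext j
  rw [hAB]
  have hcol : (fun i => (LinearMap.toMatrix' (consZero F N ∘ₗ A₀ ∘ₗ modOne F N) * X * B) i j) =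
      ∑ l, B l j • (consZero F N (A₀ (modOne F N (fun i => X i l)))) := by
    funext i
    rw [Matrix.mul_apply, Finset.sum_apply]
    refine Finset.sum_congr rfl fun l _ => ?_
    rw [Pi.smul_apply, smul_eq_mul, mul_comm]
    congr 1
    have := congrFun (LinearMap.toMatrix'_mulVec (consZero F N ∘ₗ A₀ ∘ₗ modOne F N)
      (fun i => X i l)) i
    exact this
  change _ = modOne F N (fun i => (LinearMap.toMatrix' (consZero F N ∘ₗ A₀ ∘ₗ modOne F N) * X * B) i j)
  rw [hcol, map_sum]
  refine Finset.sum_congr rfl fun l _ => ?_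
  rw [map_smul, modOne_consZero]
  rfl

/-- Theorem 1.2 / Theorem 4.10: description of linear preservers of the Cullis
determinant when `k ≥ 4`, `n ≥ k + 2` and `n + k` is odd. -/
theorem stmt0 {F : Type*} [Field F] {n k : ℕ} (hk : 4 ≤ k) (hn : k + 2 ≤ n)
    (hodd : Odd (n + k)) (hF : (k : Cardinal) < Cardinal.mk F)
    (T : Matrix (Fin n) (Fin k) F →ₗ[F] Matrix (Fin n) (Fin k) F) :
    (∀ X, cullisDet (T X) = cullisDet X) ↔
      ∃ (A : Matrix (Fin n) (Fin n) F) (B : Matrix (Fin k) (Fin k) F)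
        (φ : Matrix (Fin n) (Fin k) F →ₗ[F] Matrix (Fin n) (Fin k) F),
        (∀ (d : Finset (Fin n)) (hd : d.card = k),
          cullisDet (A.submatrix id (fun j => d.orderEmbOfFin hd j)) * B.det =
            (-1 : F) ^ ((∑ i ∈ d, (i : ℕ)) - ∑ j : Fin k, (j : ℕ))) ∧
        (∀ X (i i' : Fin n), φ X i = φ X i') ∧
        (∀ X, T X = A * X * B + φ X) := by
  obtain ⟨N, rfl⟩ : ∃ N, n = N + 1 := ⟨n - 1, by omega⟩
  constructor
  · intro hT
    obtain ⟨A, B, hAB⟩ := preserver_forward hk hn hodd hF T hT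
    have hpres : ∀ X : Matrix (Fin (N + 1)) (Fin k) F, cullisDet (A * X) * B.det = cullisDet X := by
      intro X
      rw [← cullisDet_mul, ← hT X]
      exact cullisDet_congr hodd _ _ (fun j => (congrFun (hAB X) j).symm)
    let L : Matrix (Fin (N + 1)) (Fin k) F →ₗ[F] Matrix (Fin (N + 1)) (Fin k) F :=
      { toFun := fun X => A * X * B
        map_add' := fun X Y => by rw [Matrix.mul_add, Matrix.add_mul]
        map_smul' := fun c X => by simp }
    refine ⟨A, B, T - L, ?_, ?_, ?_⟩
    · intro d hd
      rw [← cullisDet_finset d hd, cullisAlt_apply]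
      refine Eq.trans ?_ (hpres _)
      congr 2
      ext i j
      rw [Matrix.mul_apply, Finset.sum_eq_single (d.orderEmbOfFin hd j)]
      · simp
      · intro l _ hl
        simp [Pi.single_apply, hl]
      · simp
    · intro X i i'
      have h0 : colsMod F N k ((T - L) X) = 0 := by
        rw [LinearMap.sub_apply, map_sub, hAB X, sub_eq_zero]
        rfl
      funext j
      have := modOne_eq_zero (fun i => (T - L) X i j) (congrFun h0 j)
      exact (this i).trans (this i').symm
    · intro X
      rw [LinearMap.sub_apply]
      change _ = L X + _
      rw [add_sub_cancel]
  · rintro ⟨A, B, φ, h1, h2, h3⟩ X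
    rw [← cullisDet_mul_left A B.det h1 X, ← cullisDet_mul]
    refine cullisDet_congr hodd _ _ (fun j => ?_)
    have e : (fun i => T X i j) = (fun i => (A * X * B) i j) + fun i => φ X i j := by
      funext i
      rw [h3 X]
      rfl
    rw [e, map_add, modOne_const (fun i => φ X i j) (fun i => congrFun (h2 X i 0) j), add_zero]
end

section
/- Let F be a field with more than k elements, and let n ≥ k ≥ 2 with n + k odd. Then the radical of the Cullis determinant det_{n,k} : M_{n×k}(F) → F equals W_{n,k}, the space of n×k matrices all of whose rows are equal. -/
namespace CullisAux

variable {F : Type*} [Field F]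

open Classical in
theorem cullis_filter {n k : ℕ} (X : Matrix (Fin n) (Fin k) F) :
    cullisDet X = ∑ f ∈ (Finset.univ : Finset (Fin k → Fin n)).filter (fun f => StrictMono f),
      (-1 : F) ^ (∑ j : Fin k, ((f j : ℕ) - (j : ℕ))) * (X.submatrix f id).det := by
  rw [cullisDet, Finset.sum_filter]

theorem strictMono_le {n k : ℕ} {f : Fin k → Fin n} (hf : StrictMono f) (j : Fin k) :
    (j : ℕ) ≤ (f j : ℕ) := by
  obtain ⟨j, hj⟩ := j
  induction j with
  | zero => simp
  | succ j ih =>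
    have h1 := ih (by omega)
    have h2 : f ⟨j, by omega⟩ < f ⟨j + 1, hj⟩ := hf (by simp [Fin.lt_def])
    simp only [Fin.lt_def] at h2
    simp only at h1 ⊢
    omega

theorem strictMono_cons {n k : ℕ} {g : Fin k → Fin n} :
    StrictMono (Fin.cons 0 (fun j => (g j).succ) : Fin (k+1) → Fin (n+1)) ↔ StrictMono g := by
  constructor
  · intro h a b hab
    have := h (Fin.succ_lt_succ_iff.2 hab)
    simpa using this
  · intro h a b hab
    induction b using Fin.cases with
    | zero => simp at hab
    | succ b =>
      induction a using Fin.cases with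
      | zero => simp
      | succ a => simpa using h (Fin.succ_lt_succ_iff.1 hab)

/-- column form -/
noncomputable def C (n k : ℕ) (v : Fin k → Fin n → F) : F :=
  cullisDet (Matrix.of fun i j => v j i)

theorem C_rec (n k : ℕ) (v : Fin (k+1) → Fin (n+1) → F) :
    C (n+1) (k+1) v = (-1)^(k+1) * C n (k+1) (fun j i => v j i.succ)
      + ∑ j : Fin (k+1), (-1)^(j:ℕ) * v j 0 * C n k (fun j' i => v (j.succAbove j') i.succ) := by
  classical
  unfold C
  simp only [cullis_filter]
  rw [← Finset.sum_filter_not_add_sum_filter _ (fun f : Fin (k+1) → Fin (n+1) => f 0 = 0)]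
  congr 1
  · rw [Finset.mul_sum]
    symm
    refine Finset.sum_bij (fun g _ j => (g j).succ) ?_ ?_ ?_ ?_
    · intro g hg
      simp only [Finset.mem_filter, Finset.mem_univ, true_and] at hg ⊢
      exact ⟨fun a b hab => Fin.succ_lt_succ_iff.2 (hg hab), Fin.succ_ne_zero _⟩
    · intro g _ g' _ h
      funext j
      exact Fin.succ_injective _ (congrFun h j)
    · intro f hf
      simp only [Finset.mem_filter, Finset.mem_univ, true_and] at hf
      have h0 : ∀ j, f j ≠ 0 := fun j h => hf.2 (by
        have := hf.1.monotone (Fin.zero_le j)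
        rw [h] at this
        exact Fin.le_zero_iff.1 this)
      refine ⟨fun j => (f j).pred (h0 j), ?_, ?_⟩
      · simp only [Finset.mem_filter, Finset.mem_univ, true_and]
        intro a b hab
        exact Fin.pred_lt_pred_iff.2 (hf.1 hab)
      · funext j; simp
    · intro g hg
      simp only [Finset.mem_filter, Finset.mem_univ, true_and] at hg
      have : ∑ j : Fin (k+1), (((g j).succ : ℕ) - (j:ℕ))
          = (k+1) + ∑ j : Fin (k+1), ((g j : ℕ) - (j:ℕ)) := by
        have : ∀ j : Fin (k+1), (((g j).succ : ℕ) - (j:ℕ)) = 1 + ((g j : ℕ) - (j:ℕ)) := by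
          intro j
          have := strictMono_le hg j
          simp only [Fin.val_succ]; omega
        simp only [this, Finset.sum_add_distrib]
        simp
      rw [this, pow_add _ (k+1), mul_assoc]
      rfl
  · simp only [Finset.mul_sum]
    rw [Finset.sum_comm]
    symm
    refine Finset.sum_bij (fun g _ => Fin.cons 0 (fun j => (g j).succ)) ?_ ?_ ?_ ?_
    · intro g hg
      simp only [Finset.mem_filter, Finset.mem_univ, true_and] at hg ⊢
      exact ⟨strictMono_cons.2 hg, rfl⟩
    · intro g _ g' _ h
      funext j
      exact Fin.succ_injective _ (by simpa using congrFun h j.succ)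
    · intro f hf
      simp only [Finset.mem_filter, Finset.mem_univ, true_and] at hf
      have h0 : ∀ j : Fin k, f j.succ ≠ 0 := fun j h => by
        have := hf.1 (Fin.succ_pos j)
        rw [h, hf.2] at this
        exact lt_irrefl _ this
      have e : (Fin.cons 0 (fun j => ((f j.succ).pred (h0 j)).succ) : Fin (k+1) → Fin (n+1)) = f := by
        funext j
        induction j using Fin.cases with
        | zero => simp [hf.2]
        | succ j => simp
      refine ⟨fun j => (f j.succ).pred (h0 j), ?_, e⟩
      simp only [Finset.mem_filter, Finset.mem_univ, true_and]
      rw [← strictMono_cons, e]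
      exact hf.1
    · intro g hg
      rw [Matrix.det_succ_row_zero, Finset.mul_sum]
      have hs : ∑ j : Fin (k+1), (((Fin.cons 0 (fun j => (g j).succ) : Fin (k+1) → Fin (n+1)) j : ℕ) - (j:ℕ))
          = ∑ j : Fin k, ((g j : ℕ) - (j:ℕ)) := by
        rw [Fin.sum_univ_succ]; simp
      rw [hs]
      refine Finset.sum_congr rfl fun j _ => ?_
      simp only [Fin.cons_zero, Fin.cons_succ, Fin.val_succ, Fin.val_zero, Nat.add_sub_add_right,
        Nat.sub_zero, zero_add, Matrix.submatrix_apply, Matrix.of_apply, id]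
      have : (Matrix.submatrix (Matrix.of fun (i : Fin n) (j' : Fin k) => v (j.succAbove j') i.succ) g id)
        = ((Matrix.of fun i j => v j i).submatrix (Fin.cons 0 fun j => (g j).succ : Fin (k+1) → Fin (n+1)) id).submatrix
            Fin.succ j.succAbove := by
        ext a b; simp
      rw [this]
      ring

theorem asum {n k : ℕ} {ι : Type*} (s : Finset ι) (B : ι → (Fin n → F) [⋀^Fin k]→ₗ[F] F)
    (v : Fin k → Fin n → F) : (∑ a ∈ s, B a) v = ∑ a ∈ s, B a v := by
  classical
  induction s using Finset.induction_on with
  | empty => simp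
  | insert a s ha ih => rw [Finset.sum_insert ha, Finset.sum_insert ha, AlternatingMap.add_apply, ih]

/-- alternating form -/
theorem exists_alt (n k : ℕ) :
    ∃ A : (Fin n → F) [⋀^Fin k]→ₗ[F] F, ∀ v, C n k v = A v := by
  classical
  refine ⟨∑ f ∈ (Finset.univ : Finset (Fin k → Fin n)).filter (fun f => StrictMono f),
      ((-1 : F) ^ (∑ j : Fin k, ((f j : ℕ) - (j : ℕ)))) •
        (Matrix.detRowAlternating (n := Fin k) (R := F)).compLinearMap (LinearMap.funLeft F F f), ?_⟩
  intro v
  rw [C, cullis_filter, asum]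
  refine Finset.sum_congr rfl fun f _ => ?_
  rw [AlternatingMap.smul_apply, smul_eq_mul, ← Matrix.det_transpose]
  rfl

noncomputable def A (n k : ℕ) : (Fin n → F) [⋀^Fin k]→ₗ[F] F := (exists_alt n k).choose

theorem C_eq (n k : ℕ) (v : Fin k → Fin n → F) : C n k v = A n k v :=
  (exists_alt n k).choose_spec v

theorem A_rec (n k : ℕ) (v : Fin (k+1) → Fin (n+1) → F) :
    A (n+1) (k+1) v = (-1)^(k+1) * A n (k+1) (fun j i => v j i.succ)
      + ∑ j : Fin (k+1), (-1)^(j:ℕ) * v j 0 * A n k (fun j' i => v (j.succAbove j') i.succ) := by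
  simpa only [C_eq] using C_rec n k v

theorem A_zero_left (k : ℕ) (v : Fin (k+1) → Fin 0 → F) : A 0 (k+1) v = 0 :=
  (A 0 (k+1)).map_coord_zero 0 (Subsingleton.elim _ _)

theorem A_zero_right (n : ℕ) (v : Fin 0 → Fin n → F) : A n 0 v = 1 := by
  classical
  rw [← C_eq, C, cullisDet]
  simp [Subsingleton.strictMono]

theorem A_rec_cons (n k : ℕ) (y : Fin (n+1) → F) (v : Fin k → Fin (n+1) → F) :
    A (n+1) (k+1) (Fin.cons y v : Fin (k+1) → Fin (n+1) → F) =
      (-1)^(k+1) * A n (k+1) (Fin.cons (fun i => y i.succ) (fun j i => v j i.succ) : Fin (k+1) → Fin n → F)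
      + y 0 * A n k (fun j i => v j i.succ)
      + ∑ j : Fin k, (-1)^(j+1:ℕ) * v j 0 * A n k
        (fun j' i => (Fin.cons y v : Fin (k+1) → Fin (n+1) → F) (j.succ.succAbove j') i.succ) := by
  rw [A_rec, Fin.sum_univ_succ, ← add_assoc]
  congr 1
  congr 1
  · congr 2
    funext j i
    induction j using Fin.cases <;> simp
  · simp

theorem cons_succAbove {n k : ℕ} (y : Fin (n+1) → F) (v : Fin (k+1) → Fin (n+1) → F) (j : Fin (k+1)) :
    (fun j' i => (Fin.cons y v : Fin (k+1+1) → Fin (n+1) → F) (j.succ.succAbove j') i.succ)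
     = (Fin.cons (fun i => y i.succ) (fun j' i => v (j.succAbove j') i.succ) : Fin (k+1) → Fin n → F) := by
  funext j' i
  induction j' using Fin.cases <;> simp

theorem A_one (n : ℕ) : ∀ (k : ℕ) (v : Fin k → Fin n → F),
    A n (k+1) (Fin.cons (fun _ => 1) v : Fin (k+1) → Fin n → F)
      = if Even (n + k) then 0 else (-1)^k * A n k v := by
  induction n with
  | zero =>
    intro k v
    rw [A_zero_left]
    rcases k with _ | k
    · simp
    · rw [A_zero_left]; simp
  | succ n ih =>
    intro k v
    rw [A_rec_cons, ih]
    rcases k with _ | k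
    · simp only [A_zero_right]
      by_cases h : Even n <;> simp [h, Nat.even_add_one]
    · simp only [cons_succAbove, ih, A_rec]
      by_cases h : Even (n + k)
      · have h1 : ¬ Even (n + (k+1)) := by rw [← add_assoc, Nat.even_add_one]; simpa using h
        have h2 : Even (n + 1 + (k+1)) := by
          have : n + 1 + (k+1) = n + (k+1) + 1 := by ring
          rw [this, Nat.even_add_one]; exact h1
        rw [if_neg h1, if_pos h2]
        simp only [if_pos h, mul_zero, Finset.sum_const_zero, add_zero]
        have : ((-1 : F)^(k+1)) * (-1)^(k+1) = 1 := by rw [← mul_pow]; simp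
        rw [pow_succ _ (k+1)]
        linear_combination (-(A n (k+1) fun j i => v j i.succ)) * this
      · have h1 : Even (n + (k+1)) := by rw [← add_assoc, Nat.even_add_one]; exact h
        have h2 : ¬ Even (n + 1 + (k+1)) := by
          have : n + 1 + (k+1) = n + (k+1) + 1 := by ring
          rw [this, Nat.even_add_one]; simpa using h1
        rw [if_pos h1, if_neg h2]
        simp only [if_neg h]
        have : ((-1 : F)^(k+1)) * (-1)^(k+1) = 1 := by rw [← mul_pow]; simp
        rw [mul_add, ← mul_assoc, this, Finset.mul_sum]
        simp only [mul_zero, zero_add, one_mul]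
        congr 1
        refine Finset.sum_congr rfl fun j _ => ?_
        ring

theorem A_ne_zero (k : ℕ) : ∀ n, k ≤ n → ∃ v : Fin k → Fin n → F, A n k v ≠ 0 := by
  induction k with
  | zero => intro n _; exact ⟨fun j => j.elim0, by rw [A_zero_right]; exact one_ne_zero⟩
  | succ k ih =>
    intro n hn
    obtain ⟨n, rfl⟩ : ∃ m, n = m + 1 := ⟨n - 1, by omega⟩
    obtain ⟨v, hv⟩ := ih n (by omega)
    refine ⟨Fin.cons (Pi.single 0 1) (fun j => Fin.cons 0 (v j)), ?_⟩
    rw [A_rec_cons, AlternatingMap.map_coord_zero (A n (k+1)) 0]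
    · simpa using hv
    · funext i; simp

/-- reduction with first basis vector as the leading column -/
theorem A_single (n k : ℕ) (c : F) (v : Fin k → Fin n → F) :
    A (n+1) (k+1) (Fin.cons (Pi.single 0 c) (fun j => Fin.cons 0 (v j)) : Fin (k+1) → Fin (n+1) → F)
      = c * A n k v := by
  rw [A_rec_cons, AlternatingMap.map_coord_zero (A n (k+1)) 0]
  · simp
  · funext i; simp

/-- first basis vector as second column -/
theorem A_single' (n k : ℕ) (y : Fin (n+1) → F) (v : Fin k → Fin n → F) :
    A (n+1) (k+2) (Fin.cons y (Fin.cons (Pi.single 0 1) (fun j => Fin.cons 0 (v j)) :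
        Fin (k+1) → Fin (n+1) → F) : Fin (k+2) → Fin (n+1) → F)
      = - A n (k+1) (Fin.cons (fun i => y i.succ) v : Fin (k+1) → Fin n → F) := by
  rw [A_rec_cons, AlternatingMap.map_coord_zero (A n (k+2)) 1,
    AlternatingMap.map_coord_zero (A n (k+1)) 0, Fin.sum_univ_succ]
  · simp only [cons_succAbove]
    simp
  · funext i; simp
  · funext i
    show (Fin.cons _ _ : Fin (k+2) → Fin n → F) (Fin.succ 0) i = 0
    simp

theorem A1 (n : ℕ) (v : Fin 1 → Fin (n+1) → F) :
    A (n+1) 1 v = v 0 0 - A n 1 (fun j i => v j i.succ) := by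
  rw [A_rec]; simp [A_zero_right]; ring

theorem A2 (n : ℕ) (y x : Fin (n+1) → F) :
    A (n+1) 2 ![y, x] = A n 2 ![fun i => y i.succ, fun i => x i.succ]
      + y 0 * A n 1 ![fun i => x i.succ] - x 0 * A n 1 ![fun i => y i.succ] := by
  have := A_rec_cons n 1 y ![x]
  have e : (fun (j : Fin 1) (i : Fin n) => (![x] : Fin 1 → Fin (n+1) → F) j i.succ) = ![fun i => x i.succ] := by
    funext j; fin_cases j; rfl
  simp only [cons_succAbove, Fin.sum_univ_succ, e] at this
  have e2 : (Fin.cons (fun i : Fin n => y i.succ) (fun (j' : Fin 0) (i : Fin n) => (![x] : Fin 1 → Fin (n+1) → F) ((0 : Fin 1).succAbove j') i.succ)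
    : Fin 1 → Fin n → F) = ![fun i => y i.succ] := by
    funext j; fin_cases j; rfl
  rw [e2] at this
  simp only [Matrix.vecCons] at *
  rw [this]
  simp
  ring

theorem A1_adj (n : ℕ) (a : Fin n) :
    A (n+1) 1 ![(Pi.single a.castSucc 1 + Pi.single a.succ 1 : Fin (n+1) → F)] = 0 := by
  induction n with
  | zero => exact a.elim0
  | succ n ih =>
    rw [A1]
    induction a using Fin.cases with
    | zero =>
      rw [A1, (A n 1).map_coord_zero 0]
      · simp [Pi.single_apply]
      · funext i
        simp [Pi.single_apply, Fin.ext_iff]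
    | succ a =>
      have := ih a
      have e : (fun (j : Fin 1) (i : Fin (n+1)) =>
          (![(Pi.single a.succ.castSucc 1 + Pi.single a.succ.succ 1 : Fin (n+2) → F)] : Fin 1 → _) j i.succ)
          = ![(Pi.single a.castSucc 1 + Pi.single a.succ 1 : Fin (n+1) → F)] := by
        funext j i; fin_cases j; simp [Pi.single_apply, Fin.ext_iff]
      rw [e, this]
      simp [Pi.single_apply, Fin.ext_iff]

theorem A2_adj (n : ℕ) (a : Fin n) (y : Fin (n+1) → F) :
    A (n+1) 2 ![y, Pi.single a.castSucc 1 + Pi.single a.succ 1] = y a.castSucc - y a.succ := by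
  induction n with
  | zero => exact a.elim0
  | succ n ih =>
    rw [A2]
    induction a using Fin.cases with
    | zero =>
      rw [A2, A1, A1, (A n 2).map_coord_zero 1, (A n 1).map_coord_zero 0]
      · have e : (fun (j : Fin 1) (i : Fin n) => (![fun i : Fin (n+1) => y i.succ] : Fin 1 → _) j i.succ)
            = ![fun i => y i.succ.succ] := by
          funext j; fin_cases j; rfl
        rw [e]
        have e2 : (![fun i : Fin n => (fun i : Fin (n+1) => y i.succ) i.succ] : Fin 1 → Fin n → F)
            = ![fun i => y i.succ.succ] := rfl
        rw [e2]
        simp only [Pi.add_apply, Matrix.cons_val_zero, Fin.castSucc_zero, Fin.succ_zero_eq_one,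
          Pi.single_eq_same]
        have h01 : (Pi.single (1 : Fin (n+2)) (1 : F) : Fin (n+2) → F) 0 = 0 := by simp
        have h10 : (Pi.single (0 : Fin (n+2)) (1 : F) : Fin (n+2) → F) 1 = 0 := by simp
        have hz : (A n 1 fun (j : Fin 1) (i : Fin n) => (![fun i : Fin (n+1) =>
            (Pi.single (0 : Fin (n+2)) (1 : F) : Fin (n+2) → F) i.succ +
            (Pi.single (1 : Fin (n+2)) (1 : F) : Fin (n+2) → F) i.succ] : Fin 1 → _) j i.succ) = 0 := by
          refine (A n 1).map_coord_zero 0 ?_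
          funext i
          have n0 : i.succ.succ ≠ (0 : Fin (n+2)) := Fin.succ_ne_zero _
          have n1 : i.succ.succ ≠ (1 : Fin (n+2)) := fun h =>
            Fin.succ_ne_zero i (Fin.succ_injective _ h)
          show (Pi.single (0 : Fin (n+2)) (1 : F) : Fin (n+2) → F) i.succ.succ +
            (Pi.single (1 : Fin (n+2)) (1 : F) : Fin (n+2) → F) i.succ.succ = 0
          rw [Pi.single_eq_of_ne n0, Pi.single_eq_of_ne n1, add_zero]
        rw [h01, h10, hz]
        ring
      · funext i
        simp [Pi.single_apply, Fin.ext_iff]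
      · funext i
        simp [Pi.single_apply, Fin.ext_iff]
    | succ a =>
      have e : (fun (i : Fin (n+1)) =>
          (Pi.single a.succ.castSucc 1 + Pi.single a.succ.succ 1 : Fin (n+2) → F) i.succ)
          = (Pi.single a.castSucc 1 + Pi.single a.succ 1 : Fin (n+1) → F) := by
        funext i; simp [Pi.single_apply, Fin.ext_iff]
      rw [e, ih, A1_adj]
      simp [Pi.single_apply, Fin.ext_iff]

theorem const_of_adj {n : ℕ} (y : Fin (n+1) → F) (h : ∀ a : Fin n, y a.castSucc = y a.succ) (i : Fin (n+1)) :
    y i = y 0 := by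
  induction i using Fin.induction with
  | zero => rfl
  | succ i ih => rw [← h, ih]

theorem A_cons_sub (n k : ℕ) (y z : Fin n → F) (v : Fin k → Fin n → F) :
    A n (k+1) (Fin.cons (y - z) v : Fin (k+1) → Fin n → F)
      = A n (k+1) (Fin.cons y v : Fin (k+1) → Fin n → F) - A n (k+1) (Fin.cons z v : Fin (k+1) → Fin n → F) := by
  have := (A n (k+1)).map_update_sub (Fin.cons 0 v : Fin (k+1) → Fin n → F) 0 y z
  simpa [Fin.update_cons_zero] using this

theorem A_cons_const (n k : ℕ) (h : Even (n + k)) (c : F) (v : Fin k → Fin n → F) :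
    A n (k+1) (Fin.cons (fun _ => c) v : Fin (k+1) → Fin n → F) = 0 := by
  have := (A n (k+1)).map_update_smul (Fin.cons 0 v : Fin (k+1) → Fin n → F) 0 c (fun _ => 1)
  simp only [Fin.update_cons_zero, A_one, if_pos h, smul_zero] at this
  rw [← this]
  congr 2
  funext i; simp

theorem ker_const (k : ℕ) : ∀ n, k + 1 ≤ n → Even (n + k) → ∀ y : Fin (n+1) → F,
    (∀ v : Fin (k+1) → Fin (n+1) → F, A (n+1) (k+2) (Fin.cons y v : Fin (k+2) → Fin (n+1) → F) = 0) →
    ∀ i, y i = y 0 := by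
  induction k with
  | zero =>
    intro n _ _ y h
    refine const_of_adj y fun a => ?_
    have := A2_adj n a y
    rw [← sub_eq_zero, ← this]
    exact h ![_]
  | succ k ih =>
    intro n hn he y h
    obtain ⟨n, rfl⟩ : ∃ m, n = m + 1 := ⟨n - 1, by omega⟩
    have h1 := ih n (by omega) (by
        have : n + 1 + (k+1) = n + k + 2 := by ring
        rw [this] at he
        simpa [Nat.even_add] using he) (fun i => y i.succ) (by
        intro v
        rw [← neg_eq_zero, ← A_single']
        exact h _)
    set c := y (Fin.succ 0) with hc
    have hy : y - (fun _ => c) = Pi.single 0 (y 0 - c) := by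
      funext i
      induction i using Fin.cases with
      | zero => simp
      | succ i => simp [h1 i, hc]
    obtain ⟨v, hv⟩ := A_ne_zero (F := F) (k+2) (n+1) (by omega)
    have h2 := A_single (n+1) (k+2) (y 0 - c) v
    rw [← hy, A_cons_sub, h, A_cons_const _ _ (by
        have : n + 1 + 1 + (k+2) = n + 1 + (k + 1) + 2 := by ring
        rw [this]
        exact he.add (by decide))] at h2
    have h3 : y 0 - c = 0 := by
      rw [sub_zero] at h2
      exact (mul_eq_zero.1 h2.symm).resolve_right hv
    intro i
    induction i using Fin.cases with
    | zero => rfl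
    | succ i => rw [h1 i]; exact (sub_eq_zero.1 h3).symm

/-- moving a distinguished column to the front -/
theorem A_swap (n k : ℕ) (v : Fin (k+1) → Fin n → F) (j : Fin (k+1)) :
    A n (k+1) (v ∘ Equiv.swap 0 j) = 0 ↔ A n (k+1) v = 0 := by
  rw [AlternatingMap.map_perm]
  rcases Int.units_eq_one_or (Equiv.Perm.sign (Equiv.swap 0 j)) with h | h <;> simp [h]

theorem A_const_col (n k : ℕ) (h : Even (n + k)) (v : Fin (k+1) → Fin n → F) (j : Fin (k+1)) (c : F)
    (hj : v j = fun _ => c) : A n (k+1) v = 0 := by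
  rw [← A_swap n k v j, ← Fin.cons_self_tail (v ∘ Equiv.swap 0 j)]
  have : (v ∘ Equiv.swap 0 j) 0 = fun _ => c := by simp [hj]
  rw [this, A_cons_const n k h]

theorem col_of_rad {n k : ℕ} (Y : Fin k → Fin n → F) (t : F) (ht0 : t ≠ 0) (ht1 : t ≠ 1)
    (h : ∀ X, A n k (X + Y) = A n k X) (j : Fin k) (X : Fin k → Fin n → F) (hX : X j = Y j) :
    A n k X = 0 := by
  have hsm : ∀ (V : Fin k → Fin n → F) (s : F), A n k (Function.update V j (s • V j)) = s * A n k V := by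
    intro V s
    rw [AlternatingMap.map_update_smul, Function.update_eq_self]; rfl
  have hZ : ∀ V, A n k (V + Function.update Y j (t • Y j)) = A n k V := by
    intro V
    have e : V + Function.update Y j (t • Y j) =
        Function.update (Function.update V j (t⁻¹ • V j) + Y) j
          (t • (Function.update V j (t⁻¹ • V j) + Y) j) := by
      funext a
      by_cases ha : a = j
      · subst ha; simp [smul_smul, ht0]
      · simp [ha]
    rw [e, hsm, h, hsm, ← mul_assoc, mul_inv_cancel₀ ht0, one_mul]
  have h1 : A n k (Function.update X j ((1 - t) • X j) + Function.update Y j (t • Y j)) = 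
     A n k (Function.update X j 0 + Y) := by
    congr 1
    funext a
    by_cases ha : a = j
    · subst ha; simp [hX, ← add_smul]
    · simp [ha]
  rw [hZ, h, hsm, AlternatingMap.map_update_zero] at h1
  exact (mul_eq_zero.1 h1).resolve_left (sub_ne_zero.2 ht1.symm)

theorem cullis_eq {n k : ℕ} (X : Matrix (Fin n) (Fin k) F) : cullisDet X = A n k (fun j i => X i j) := by
  rw [← C_eq]; rfl

end CullisAux

open CullisAux in
/-- Lemma 3.6: if `n + k` is odd then the radical of the Cullis determinant is
`W_{n,k}`, the set of matrices all of whose rows are equal. -/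
theorem stmt2 {F : Type*} [Field F] {n k : ℕ} (hk : 2 ≤ k) (hkn : k ≤ n)
    (hodd : Odd (n + k)) (hF : (k : Cardinal) < Cardinal.mk F) :
    {Y : Matrix (Fin n) (Fin k) F | ∀ (X : Matrix (Fin n) (Fin k) F) (l : F),
        cullisDet (X + l • Y) = cullisDet X} =
      {Y : Matrix (Fin n) (Fin k) F | ∀ i i' : Fin n, Y i = Y i'} := by
  have hne : n ≠ k := by
    rintro rfl
    rw [← Nat.not_even_iff_odd] at hodd
    exact hodd ⟨n, rfl⟩
  obtain ⟨k, rfl⟩ : ∃ m, k = m + 2 := ⟨k - 2, by omega⟩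
  obtain ⟨n, rfl⟩ : ∃ m, n = m + 1 := ⟨n - 1, by omega⟩
  have he : Even (n + 1 + (k + 1)) := by
    have : n + 1 + (k + 2) = n + 1 + (k+1) + 1 := by ring
    rw [this, ← Nat.not_even_iff_odd, Nat.even_add_one, not_not] at hodd
    exact hodd
  ext Y
  simp only [Set.mem_setOf_eq, cullis_eq]
  constructor
  · intro h
    obtain ⟨t, ht0, ht1⟩ : ∃ t : F, t ≠ 0 ∧ t ≠ 1 := by
      by_contra! hcon
      have h1 : Set.univ ⊆ ({0, 1} : Set F) := fun t _ => by
        by_cases h0 : t = 0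
        · simp [h0]
        · simp [hcon t h0]
      have h2 := Cardinal.mk_le_mk_of_subset h1
      rw [Cardinal.mk_univ] at h2
      have h3 : Cardinal.mk ({0, 1} : Set F) = 2 := by
        rw [Cardinal.mk_insert (by simp), Cardinal.mk_singleton]; norm_num
      rw [h3] at h2
      have h4 := hF.trans_le h2
      have h5 : k + 2 < 2 := by exact_mod_cast h4
      omega
    have hA : ∀ X, A (n+1) (k+2) (X + fun j i => Y i j) = A (n+1) (k+2) X := fun X => by
      have := h (Matrix.of fun i j => X j i) 1
      rw [one_smul] at this
      exact this
    have key : ∀ j i, Y i j = Y 0 j := by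
      intro j
      refine ker_const k n (by omega) ?_ (fun i => Y i j) ?_
      · have : n + 1 + (k+1) = n + k + 2 := by ring
        rw [this] at he
        simpa [Nat.even_add] using he
      · intro v
        rw [← A_swap _ _ _ j]
        refine col_of_rad (fun j i => Y i j) t ht0 ht1 hA j _ ?_
        simp
    intro i i'
    funext j
    rw [key j i, key j i']
  · intro h X l
    have := (A (F := F) (n+1) (k+2)).toMultilinearMap.map_add_univ (fun j i => X i j)
      (fun j i => l * Y i j)
    refine this.trans ?_
    rw [Finset.sum_eq_single Finset.univ]
    · simp
    · intro s _ hs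
      obtain ⟨j, hj⟩ : ∃ j, j ∉ s := by
        by_contra! hcon
        exact hs (Finset.eq_univ_iff_forall.2 hcon)
      refine A_const_col (n+1) (k+1) he _ j (l * Y 0 j) ?_
      rw [Finset.piecewise_eq_of_notMem _ _ _ hj]
      funext i
      simp [h i 0]
    · simp
end

section
/- Let F be a field and let n ≥ k ≥ 1 with n + k odd, n ≥ 2. Then for every n×k matrix X over F, det_{n,k}(X) = det_{(n-1),k}(L^-(X)). -/
/-- `L⁻`: subtract the last row from the others and delete it. -/
def Lminus {F : Type*} [Field F] {n k : ℕ}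
    (X : Matrix (Fin n) (Fin k) F) : Matrix (Fin (n - 1)) (Fin k) F :=
  fun i j => X ⟨i, by have := i.isLt; omega⟩ j - X ⟨n - 1, by have := i.isLt; omega⟩ j

namespace Cullis

open Finset

/-- strictly increasing `k`-tuples of naturals below `n` -/
noncomputable def T (n k : ℕ) : Finset (Fin k → ℕ) := by
  classical exact (Fintype.piFinset (fun _ : Fin k => Finset.range n)).filter StrictMono

lemma mem_T {n k : ℕ} {f : Fin k → ℕ} : f ∈ T n k ↔ (∀ i, f i < n) ∧ StrictMono f := by
  simp [T]

lemma strictMono_snoc {k n : ℕ} {f : Fin k → ℕ} (h1 : ∀ i, f i < n) (h2 : StrictMono f) :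
    StrictMono (Fin.snoc f n : Fin (k+1) → ℕ) := by
  intro a b hab
  induction b using Fin.lastCases with
  | last =>
    induction a using Fin.lastCases with
    | last => exact absurd hab (lt_irrefl _)
    | cast a => simpa using h1 a
  | cast b =>
    induction a using Fin.lastCases with
    | last => exact absurd hab (not_lt.2 (Fin.le_last _))
    | cast a => simpa using h2 (by simpa using hab)

lemma sum_T_succ {A : Type*} [AddCommMonoid A] (n k : ℕ) (G : (Fin (k+1) → ℕ) → A) :
    ∑ f ∈ T (n+1) (k+1), G f
      = ∑ f ∈ T n (k+1), G f + ∑ f ∈ T n k, G (Fin.snoc f n : Fin (k+1) → ℕ) := by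
  classical
  have hT : T (n+1) (k+1) = T n (k+1) ∪
      (T n k).image (fun f => (Fin.snoc f n : Fin (k+1) → ℕ)) := by
    ext f
    simp only [mem_union, mem_image, mem_T]
    constructor
    · rintro ⟨h1, h2⟩
      by_cases h : f (Fin.last k) < n
      · left
        exact ⟨fun i => lt_of_le_of_lt (h2.monotone (Fin.le_last i)) h, h2⟩
      · right
        have hl : f (Fin.last k) = n := by have := h1 (Fin.last k); omega
        refine ⟨fun i => f i.castSucc, ⟨fun i => ?_, fun a b hab => h2 (by simpa using hab)⟩, ?_⟩
        · have := h2 (Fin.castSucc_lt_last i); show f i.castSucc < n; omega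
        · rw [← hl]; exact Fin.snoc_init_self f
    · rintro (⟨h1, h2⟩ | ⟨g, ⟨h1, h2⟩, rfl⟩)
      · exact ⟨fun i => (h1 i).trans (Nat.lt_succ_self n), h2⟩
      · refine ⟨fun i => ?_, strictMono_snoc h1 h2⟩
        induction i using Fin.lastCases with
        | last => simp
        | cast i => simpa using (h1 i).trans (Nat.lt_succ_self n)
  rw [hT, sum_union, sum_image]
  · intro f _ g _ hfg
    exact (Fin.snoc_injective2 hfg).1
  · rw [disjoint_left]
    intro f hf hf'
    rw [mem_image] at hf'
    obtain ⟨g, _, rfl⟩ := hf'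
    have := (mem_T.1 hf).1 (Fin.last k)
    simp at this

variable {F : Type*} [Field F] {M : Type*} [AddCommGroup M] [Module F M]

noncomputable def W (F : Type*) [Field F] {M : Type*} [AddCommGroup M] [Module F M]
    (x : ℕ → M) (n k : ℕ) : ExteriorAlgebra F M :=
  ∑ f ∈ T n k, ((-1 : F) ^ (∑ j : Fin k, (f j + (j : ℕ)))) •
    ExteriorAlgebra.ιMulti F k (fun j => x (f j))

lemma W_zero_succ (x : ℕ → M) (k : ℕ) : W F x 0 (k+1) = 0 := by
  have : T 0 (k+1) = ∅ := by
    ext f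
    simp only [mem_T, notMem_empty, iff_false]
    intro h
    exact absurd (h.1 0) (Nat.not_lt_zero _)
  simp [W, this]

lemma W_zero (x : ℕ → M) (n : ℕ) : W F x n 0 = 1 := by
  have : T n 0 = {Fin.elim0} := by
    ext f
    simp only [mem_T, mem_singleton]
    constructor
    · intro _; exact Subsingleton.elim _ _
    · intro _; exact ⟨fun i => i.elim0, fun i => i.elim0⟩
  simp [W, this, ExteriorAlgebra.ιMulti_apply]

lemma W_succ (x : ℕ → M) (n k : ℕ) : W F x (n+1) (k+1) = W F x n (k+1) +
    ((-1 : F) ^ (n + k)) • (W F x n k * ExteriorAlgebra.ι F (x n)) := by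
  unfold W
  rw [sum_T_succ, Finset.sum_mul, Finset.smul_sum]
  congr 1
  refine Finset.sum_congr rfl fun f _ => ?_
  rw [Fin.sum_univ_castSucc]
  simp only [Fin.snoc_castSucc, Fin.snoc_last, Fin.val_castSucc, Fin.val_last]
  rw [pow_add, mul_comm, mul_smul, smul_mul_assoc]
  congr 2
  simp only [ExteriorAlgebra.ιMulti_apply]
  rw [List.ofFn_succ', List.concat_eq_append, List.prod_append]
  simp

lemma W_shift (x : ℕ → M) (v : M) (n : ℕ) : ∀ k : ℕ,
    (Even (n + k) → W F (fun i => x i + v) n (k+1) = W F x n (k+1)) ∧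
    (Odd (n + k) → W F (fun i => x i + v) n (k+1)
      = W F x n (k+1) + W F x n k * ExteriorAlgebra.ι F v) := by
  induction n with
  | zero =>
    intro k
    cases k with
    | zero => simp [W_zero_succ]
    | succ k => simp [W_zero_succ]
  | succ n ih =>
    intro k
    have anti : ∀ a : ExteriorAlgebra F M, a * ExteriorAlgebra.ι F v * ExteriorAlgebra.ι F (x n)
        = -(a * ExteriorAlgebra.ι F (x n) * ExteriorAlgebra.ι F v) := by
      intro a
      rw [mul_assoc, mul_assoc, ← mul_neg]
      congr 1
      exact eq_neg_of_add_eq_zero_left (ExteriorAlgebra.ι_add_mul_swap v (x n))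
    have sq : ∀ a : ExteriorAlgebra F M,
        a * ExteriorAlgebra.ι F v * ExteriorAlgebra.ι F v = 0 := by
      intro a
      rw [mul_assoc, ExteriorAlgebra.ι_sq_zero, mul_zero]
    constructor
    · intro he
      have ho : Odd (n + k) := by
        rcases he with ⟨r, hr⟩
        exact ⟨r - 1, by omega⟩
      rw [W_succ, W_succ, (ih k).2 ho, ho.neg_one_pow]
      cases k with
      | zero =>
        simp only [W_zero, map_add, one_mul, neg_smul, one_smul]
        abel
      | succ k =>
        have he' : Even (n + k) := by
          rcases ho with ⟨r, hr⟩
          exact ⟨r, by omega⟩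
        rw [(ih k).1 he']
        simp only [map_add, mul_add, neg_smul, one_smul]
        abel
    · intro ho
      have he : Even (n + k) := by
        rcases ho with ⟨r, hr⟩
        exact ⟨r, by omega⟩
      rw [W_succ, W_succ, (ih k).1 he, he.neg_one_pow]
      cases k with
      | zero =>
        simp only [W_zero, map_add, one_mul, one_smul]
        abel
      | succ k =>
        have ho' : Odd (n + k) := by
          rcases he with ⟨r, hr⟩
          exact ⟨r - 1, by omega⟩
        rw [(ih k).2 ho', W_succ x n k, ho'.neg_one_pow]
        simp only [map_add, mul_add, add_mul, neg_smul, one_smul, anti, sq, neg_mul]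
        abel

lemma le_of_strictMono {k : ℕ} {f : Fin k → ℕ} (h : StrictMono f) (j : Fin k) : (j : ℕ) ≤ f j := by
  obtain ⟨j, hj⟩ := j
  induction j with
  | zero => simp
  | succ j ih =>
    have h1 := ih (by omega)
    have h2 : f ⟨j, by omega⟩ < f ⟨j+1, hj⟩ := h (by simp)
    simp only at *
    omega

lemma cullis_eq {n k : ℕ} (x : ℕ → Fin k → F) :
    cullisDet (fun (i : Fin n) => x i : Matrix (Fin n) (Fin k) F) =
      ExteriorAlgebra.liftAlternating (R := F)
        (Function.update 0 k (Matrix.detRowAlternating : (Fin k → F) [⋀^Fin k]→ₗ[F] F))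
        (W F x n k) := by
  classical
  unfold W cullisDet
  simp only [map_sum, map_smul]
  rw [← Finset.sum_filter]
  refine Finset.sum_bij (fun f _ j => (f j : ℕ)) ?_ ?_ ?_ ?_
  · intro f hf
    rw [mem_T]
    exact ⟨fun i => (f i).2, fun a b hab => (mem_filter.1 hf).2 hab⟩
  · intro f _ g _ h
    funext j
    exact Fin.ext (congrFun h j)
  · intro f hf
    rw [mem_T] at hf
    exact ⟨fun j => ⟨f j, hf.1 j⟩, mem_filter.2 ⟨mem_univ _, fun a b hab => hf.2 hab⟩, rfl⟩
  · intro f hf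
    have hs : StrictMono (fun j => (f j : ℕ)) := fun a b hab => (mem_filter.1 hf).2 hab
    rw [ExteriorAlgebra.liftAlternating_apply_ιMulti, Function.update_self, smul_eq_mul]
    congr 1
    rw [← Finset.prod_pow_eq_pow_sum, ← Finset.prod_pow_eq_pow_sum]
    refine Finset.prod_congr rfl fun j _ => ?_
    have := le_of_strictMono hs j
    obtain ⟨d, hd⟩ := Nat.exists_eq_add_of_le this
    beta_reduce
    rw [hd, Nat.add_sub_cancel_left, show (j : ℕ) + d + j = d + 2 * j by ring, pow_add, pow_mul]
    simp

end Cullis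

theorem stmt6 {F : Type*} [Field F] {n k : ℕ} (hk : 1 ≤ k) (hkn : k ≤ n)
    (hn : 2 ≤ n) (hodd : Odd (n + k)) (X : Matrix (Fin n) (Fin k) F) :
    cullisDet X = cullisDet (Lminus X) := by
  obtain ⟨N, rfl⟩ : ∃ N, n = N + 1 := ⟨n - 1, by omega⟩
  obtain ⟨m, rfl⟩ : ∃ m, k = m + 1 := ⟨k - 1, by omega⟩
  let x : ℕ → Fin (m+1) → F := fun i => if h : i < N + 1 then X ⟨i, h⟩ else 0
  have hX : X = (fun (i : Fin (N+1)) => x i : Matrix (Fin (N+1)) (Fin (m+1)) F) := by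
    funext i
    show X i = if h : (i : ℕ) < N + 1 then X ⟨i, h⟩ else 0
    rw [dif_pos i.2]
  have hL : Lminus X = (fun (i : Fin N) => x i + -x N : Matrix (Fin N) (Fin (m+1)) F) := by
    funext i j
    have h1 : (i : ℕ) < N + 1 := Nat.lt_succ_of_lt i.2
    simp [x, Lminus, h1, sub_eq_add_neg]
  have he : Even (N + 1 + m) := by
    rcases hodd with ⟨r, hr⟩
    exact ⟨r, by omega⟩
  rw [hL]
  conv_lhs => rw [hX]
  rw [Cullis.cullis_eq x]
  refine Eq.trans ?_ (Cullis.cullis_eq (n := N) (fun i => x i + -x N)).symm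
  rw [← (Cullis.W_shift x (-x N) (N+1) m).1 he, Cullis.W_succ]
  simp
end

section
/- Let F be a field, let n > k ≥ 1 with n + k odd, and let S be a linear map on M_{(n-1)×k}(F) such that det_{(n-1),k}(S(Y)) = det_{(n-1),k}(Y) for all (n−1)×k matrices Y over F. Define the linear map T on M_{n×k}(F) by T = L^+ ∘ S ∘ L^-. Then det_{n,k}(T(X)) = det_{n,k}(X) for all n×k matrices X over F. -/
/-- `L⁺`: append a zero row at the bottom. -/
def Lplus {F : Type*} [Field F] {n k : ℕ}
    (Y : Matrix (Fin (n - 1)) (Fin k) F) : Matrix (Fin n) (Fin k) F :=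
  fun i j => if h : (i : ℕ) < n - 1 then Y ⟨i, h⟩ j else 0

open Classical in
theorem cullisDet_eq_s9 {F : Type*} [Field F] {n k : ℕ} (X : Matrix (Fin n) (Fin k) F) :
    cullisDet X = ∑ f ∈ Finset.univ.filter (fun f : Fin k → Fin n => StrictMono f),
      (-1 : F) ^ (∑ j : Fin k, ((f j : ℕ) + (j : ℕ))) * (X.submatrix f id).det := by
  unfold cullisDet
  rw [Finset.sum_filter]
  refine Finset.sum_congr rfl fun f _ => ?_
  by_cases hf : StrictMono f
  · rw [if_pos hf, if_pos hf]
    congr 1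
    rw [← Finset.prod_pow_eq_pow_sum, ← Finset.prod_pow_eq_pow_sum]
    refine Finset.prod_congr rfl fun j _ => ?_
    have h : (j : ℕ) ≤ f j := by
      have : ∀ m : ℕ, ∀ h : m < k, m ≤ (f ⟨m, h⟩ : ℕ) := by
        intro m
        induction m with
        | zero => intro h; omega
        | succ m ih =>
          intro h
          have h1 := ih (by omega)
          have h2 : f ⟨m, by omega⟩ < f ⟨m + 1, h⟩ := hf (by simp [Fin.lt_def])
          rw [Fin.lt_def] at h2
          omega
      exact this j j.2
    have e : (f j : ℕ) + j = (f j - j) + 2 * j := by omega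
    rw [e, pow_add, pow_mul]
    simp
  · rw [if_neg hf, if_neg hf]

theorem cullisDet_zero_cols {F : Type*} [Field F] {n : ℕ} (X : Matrix (Fin n) (Fin 0) F) :
    cullisDet X = 1 := by
  have h : ∀ f : Fin 0 → Fin n, StrictMono f := fun f i => i.elim0
  simp [cullisDet, h]

theorem cullisDet_zero_rows {F : Type*} [Field F] {k : ℕ} (X : Matrix (Fin 0) (Fin (k + 1)) F) :
    cullisDet X = 0 := by
  unfold cullisDet
  exact Finset.sum_eq_zero fun f _ => (f 0).elim0

theorem exists_succ_comp {n k : ℕ} (f : Fin k → Fin (n + 1)) (hf : ∀ j, f j ≠ 0) :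
    ∃ g : Fin k → Fin n, f = fun j => (g j).succ :=
  ⟨fun j => (f j).pred (hf j), by ext j; simp⟩

theorem cullisDet_succ {F : Type*} [Field F] {n k : ℕ}
    (X : Matrix (Fin (n + 1)) (Fin (k + 1)) F) :
    cullisDet X = (-1) ^ (k + 1) * cullisDet (X.submatrix Fin.succ id) +
      ∑ j : Fin (k + 1), (-1) ^ (j : ℕ) * X 0 j *
        cullisDet (X.submatrix Fin.succ j.succAbove) := by
  classical
  rw [cullisDet_eq_s9 X, ← Finset.sum_filter_not_add_sum_filter _ (fun f => f 0 = 0)]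
  congr 1
  · rw [cullisDet_eq_s9, Finset.mul_sum]
    symm
    refine Finset.sum_bij (fun g _ => fun j => (g j).succ) ?_ ?_ ?_ ?_
    · intro g hg
      simp only [Finset.mem_filter, Finset.mem_univ, true_and] at hg ⊢
      exact ⟨fun a b h => Fin.succ_lt_succ_iff.2 (hg h), Fin.succ_ne_zero _⟩
    · intro g _ g' _ h
      funext j
      exact Fin.succ_injective _ (congrFun h j)
    · intro f hf
      simp only [Finset.mem_filter, Finset.mem_univ, true_and] at hf
      obtain ⟨g, rfl⟩ := exists_succ_comp f (fun j h => by
        have := hf.1.monotone (Fin.zero_le j)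
        rw [h] at this
        exact hf.2 (Fin.le_zero_iff.1 this))
      refine ⟨g, ?_, rfl⟩
      simp only [Finset.mem_filter, Finset.mem_univ, true_and]
      exact fun a b h => Fin.succ_lt_succ_iff.1 (hf.1 h)
    · intro g _
      rw [← mul_assoc, ← pow_add]
      congr 2
      simp only [Fin.val_succ, Finset.sum_add_distrib]
      simp
      ring
  · simp_rw [cullisDet_eq_s9, Finset.mul_sum]
    rw [Finset.sum_comm]
    symm
    refine Finset.sum_bij (fun g _ => Fin.cons 0 (fun j => (g j).succ)) ?_ ?_ ?_ ?_
    · intro g hg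
      simp only [Finset.mem_filter, Finset.mem_univ, true_and] at hg ⊢
      refine ⟨?_, rfl⟩
      intro a b h
      induction b using Fin.cases with
      | zero => exact absurd h (Fin.not_lt_zero a)
      | succ b =>
        induction a using Fin.cases with
        | zero => simp
        | succ a =>
          simp only [Fin.cons_succ]
          exact Fin.succ_lt_succ_iff.2 (hg (Fin.succ_lt_succ_iff.1 h))
    · intro g _ g' _ h
      funext j
      have := congrFun h j.succ
      simpa using this
    · intro f hf
      simp only [Finset.mem_filter, Finset.mem_univ, true_and] at hf
      obtain ⟨g, hg⟩ := exists_succ_comp (fun j => f j.succ) (fun j h => by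
        have := hf.1 (Fin.succ_pos j)
        rw [h] at this
        exact absurd this (Fin.not_lt_zero _))
      refine ⟨g, ?_, ?_⟩
      · simp only [Finset.mem_filter, Finset.mem_univ, true_and]
        intro a b h
        have h2 := hf.1 (Fin.succ_lt_succ_iff.2 h)
        have ha := congrFun hg a
        have hb := congrFun hg b
        rw [ha, hb] at h2
        exact Fin.succ_lt_succ_iff.1 h2
      · funext j
        induction j using Fin.cases with
        | zero => simp [hf.2]
        | succ j => simpa using (congrFun hg j).symm
    · intro g _
      rw [Matrix.det_succ_row_zero, Finset.mul_sum]
      refine Finset.sum_congr rfl fun j _ => ?_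
      have e : (-1 : F) ^ (∑ i : Fin (k + 1),
          (((Fin.cons 0 (fun j => (g j).succ) : Fin (k + 1) → Fin (n + 1)) i : ℕ) + (i : ℕ)))
          = (-1) ^ (∑ i : Fin k, ((g i : ℕ) + (i : ℕ))) := by
        rw [Fin.sum_univ_succ]
        simp only [Fin.cons_zero, Fin.cons_succ, Fin.val_succ, Fin.val_zero, zero_add]
        rw [← Finset.prod_pow_eq_pow_sum, ← Finset.prod_pow_eq_pow_sum]
        refine Finset.prod_congr rfl fun i _ => ?_
        have : (g i : ℕ) + 1 + (i + 1) = (g i + i) + 2 := by ring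
        rw [this, pow_add]
        simp
      rw [e]
      have e2 : ((X.submatrix (Fin.cons 0 (fun j => (g j).succ)) id).submatrix Fin.succ
          j.succAbove) = (X.submatrix Fin.succ j.succAbove).submatrix g id := by
        ext a b
        simp
      rw [e2]
      simp only [Matrix.submatrix_apply, Fin.cons_zero, id]
      ring

/-- Prepend a column of ones. -/
def addOnes {F : Type*} [Field F] {n k : ℕ} (X : Matrix (Fin n) (Fin k) F) :
    Matrix (Fin n) (Fin (k + 1)) F :=
  fun i => Fin.cons 1 (X i)

theorem cullisDet_addOnes {F : Type*} [Field F] (n : ℕ) : ∀ (k : ℕ)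
    (X : Matrix (Fin n) (Fin k) F),
    cullisDet (addOnes X) = if Even (n + k) then 0 else (-1) ^ k * cullisDet X := by
  induction n with
  | zero =>
    intro k X
    rw [cullisDet_zero_rows]
    cases k with
    | zero => simp
    | succ k => rw [cullisDet_zero_rows]; simp
  | succ n ih =>
    intro k X
    rw [cullisDet_succ, Fin.sum_univ_succ]
    have e1 : (addOnes X).submatrix Fin.succ id = addOnes (X.submatrix Fin.succ id) := by
      ext i j
      induction j using Fin.cases <;> simp [addOnes]
    have e2 : (addOnes X).submatrix Fin.succ (Fin.succAbove 0) = X.submatrix Fin.succ id := by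
      ext i j
      simp [addOnes]
    have e3 : addOnes X 0 0 = 1 := rfl
    rw [e1, e2, e3, ih]
    cases k with
    | zero =>
      simp only [cullisDet_zero_cols, Finset.univ_eq_empty, Finset.sum_empty]
      by_cases h : Even n
      · simp [h, Nat.even_add_one]
      · simp [h, Nat.even_add_one]
    | succ k =>
      have e4 : ∀ j : Fin (k + 1), (addOnes X).submatrix Fin.succ (Fin.succAbove j.succ) =
          addOnes (X.submatrix Fin.succ j.succAbove) := by
        intro j
        ext a b
        induction b using Fin.cases <;> simp [addOnes]
      have e5 : ∀ j : Fin (k + 1), addOnes X 0 j.succ = X 0 j := fun j => rfl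
      simp_rw [e4, e5, ih]
      by_cases h : Even (n + k)
      · have h1 : ¬ Even (n + (k + 1)) := by
          rw [← add_assoc, Nat.even_add_one]; simpa using h
        have h2 : Even (n + 1 + (k + 1)) := by
          have : n + 1 + (k + 1) = (n + k) + 2 := by ring
          rw [this]; exact h.add even_two
        rw [if_neg h1, if_pos h2]
        simp only [if_pos h, mul_zero, Finset.sum_const_zero]
        rw [← mul_assoc, ← pow_add]
        have : k + 1 + 1 + (k + 1) = 2 * (k + 1) + 1 := by ring
        rw [this, pow_add, pow_mul]
        simp
      · have h1 : Even (n + (k + 1)) := by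
          rw [← add_assoc, Nat.even_add_one]; exact h
        have h2 : ¬ Even (n + 1 + (k + 1)) := by
          have : n + 1 + (k + 1) = (n + (k + 1)) + 1 := by ring
          rw [this, Nat.even_add_one]; simpa using h1
        rw [if_pos h1, if_neg h2]
        simp only [if_neg h]
        rw [cullisDet_succ X, mul_add, ← mul_assoc, ← pow_add, ← two_mul, pow_mul, Finset.mul_sum]
        simp only [mul_zero, zero_add, Fin.val_zero, pow_zero, mul_one, one_mul, neg_one_sq,
          one_pow]
        congr 1
        refine Finset.sum_congr rfl fun j _ => ?_
        rw [Fin.val_succ]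
        ring

theorem cullisDet_Lplus {F : Type*} [Field F] {m k : ℕ}
    (Y : Matrix (Fin m) (Fin k) F) :
    cullisDet (Lplus (n := m + 1) Y) = cullisDet Y := by
  classical
  rw [cullisDet_eq_s9, cullisDet_eq_s9]
  symm
  refine Finset.sum_bij_ne_zero (fun g _ _ => fun j => (g j).castSucc) ?_ ?_ ?_ ?_
  · intro g hg _
    simp only [Finset.mem_filter, Finset.mem_univ, true_and] at hg ⊢
    exact fun a b h => Fin.castSucc_lt_castSucc_iff.2 (hg h)
  · intro g _ _ g' _ _ h
    funext j
    exact Fin.castSucc_injective _ (congrFun h j)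
  · intro f hf h0
    simp only [Finset.mem_filter, Finset.mem_univ, true_and] at hf
    have hlt : ∀ j, f j ≠ Fin.last m := by
      intro j hj
      apply h0
      rw [Matrix.det_eq_zero_of_row_eq_zero j, mul_zero]
      intro i
      simp [Lplus, hj]
    have hfe : f = fun j => ((f j).castPred (hlt j)).castSucc := by
      ext j; simp
    have key : (Lplus (n := m + 1) Y).submatrix f id =
        Y.submatrix (fun j => (f j).castPred (hlt j)) id := by
      ext a b
      have : (f a : ℕ) < m := Fin.val_lt_last (hlt a)
      simp [Lplus, this]
      rfl
    refine ⟨fun j => (f j).castPred (hlt j), ?_, ?_, hfe.symm⟩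
    · simp only [Finset.mem_filter, Finset.mem_univ, true_and]
      exact fun a b h => Fin.castPred_lt_castPred_iff.2 (hf h)
    · rw [key] at h0
      simpa using h0
  · intro g _ _
    have key : (Lplus (n := m + 1) Y).submatrix (fun j => (g j).castSucc) id =
        Y.submatrix g id := by
      ext a b
      simp [Lplus]
    rw [key]
    simp

theorem cullisDet_addOnes_sub {F : Type*} [Field F] {n k : ℕ}
    (X Y : Matrix (Fin n) (Fin k) F) (c : Fin k → F) (h : ∀ i j, X i j = Y i j + c j) :
    cullisDet (addOnes X) = cullisDet (addOnes Y) := by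
  unfold cullisDet
  refine Finset.sum_congr rfl fun f _ => ?_
  have : ((addOnes X).submatrix f id).det = ((addOnes Y).submatrix f id).det := by
    rw [← Matrix.det_transpose, ← Matrix.det_transpose ((addOnes Y).submatrix f id)]
    refine Matrix.det_eq_of_forall_row_eq_smul_add_const (Fin.cons 0 c) 0 rfl ?_
    intro i j
    induction i using Fin.cases with
    | zero => simp [addOnes]
    | succ i => simp [addOnes, h]
  rw [this]

theorem cullisDet_Lminus {F : Type*} [Field F] {m k : ℕ} (hodd : Odd (m + 1 + k))
    (X : Matrix (Fin (m + 1)) (Fin k) F) :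
    cullisDet (Lminus X) = cullisDet X := by
  rw [← cullisDet_Lplus (m := m) (Lminus X)]
  have h1 := cullisDet_addOnes (m + 1) k (Lplus (n := m + 1) (Lminus X))
  have h2 := cullisDet_addOnes (m + 1) k X
  rw [if_neg (Nat.not_even_iff_odd.2 hodd)] at h1 h2
  have h3 := cullisDet_addOnes_sub X (Lplus (n := m + 1) (Lminus X)) (fun j => X (Fin.last m) j) (by
    intro i j
    induction i using Fin.lastCases with
    | last => simp [Lplus]
    | cast i =>
      simp [Lplus, Lminus, Fin.last]
      rfl)
  rw [h1, h2] at h3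
  exact (mul_left_cancel₀ (pow_ne_zero _ (neg_ne_zero.2 one_ne_zero)) h3).symm

/-- Lemma 4.9: if `S` preserves `det_{(n-1),k}` with `n + k` odd, then
`T = L⁺ ∘ S ∘ L⁻` preserves `det_{n,k}`. -/
theorem stmt9 {F : Type*} [Field F] {n k : ℕ} (hk : 1 ≤ k) (hkn : k < n)
    (hodd : Odd (n + k))
    (S : Matrix (Fin (n - 1)) (Fin k) F →ₗ[F] Matrix (Fin (n - 1)) (Fin k) F)
    (hS : ∀ Y, cullisDet (S Y) = cullisDet Y)
    (X : Matrix (Fin n) (Fin k) F) :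
    cullisDet (Lplus (S (Lminus X))) = cullisDet X := by
  obtain ⟨m, rfl⟩ : ∃ m, n = m + 1 := ⟨n - 1, by omega⟩
  exact (cullisDet_Lplus (m := m) (S (Lminus X))).trans
    ((hS _).trans (cullisDet_Lminus hodd X))
end

section
/- Let F be a field with more than k elements, let n > k ≥ 2 with n + k odd, and let T be a linear map on M_{n×k}(F) such that det_{n,k}(T(X)) = det_{n,k}(X) for all X and such that the image of T equals M^0_{n,k}(F). Then the kernel of T equals the radical of det_{n,k} (which equals W_{n,k}). -/
open Classical in
noncomputable def cterm {F : Type*} [Field F] {n k : ℕ}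
    (X : Matrix (Fin n) (Fin k) F) (f : Fin k → Fin n) : F :=
  if StrictMono f then
    (-1 : F) ^ (∑ j : Fin k, ((f j : ℕ) - (j : ℕ))) * (X.submatrix f id).det
  else 0

lemma cullisDet_eq_cterm {F : Type*} [Field F] {n k : ℕ}
    (X : Matrix (Fin n) (Fin k) F) : cullisDet X = ∑ f, cterm X f := rfl

lemma cterm_zero_of_col {F : Type*} [Field F] {n k : ℕ}
    (X : Matrix (Fin n) (Fin k) F) (f : Fin k → Fin n) (m : Fin k)
    (h : ∀ i, X (f i) m = 0) : cterm X f = 0 := by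
  unfold cterm
  split_ifs
  · rw [Matrix.det_eq_zero_of_column_eq_zero m (by simpa using h), mul_zero]
  · rfl

lemma strictMono_id_le {n k : ℕ} (f : Fin k → Fin n) (hf : StrictMono f) (i : Fin k) :
    (i : ℕ) ≤ f i := by
  obtain ⟨i, hi⟩ := i
  induction i with
  | zero => simp
  | succ i ih =>
    have h1 := ih (by omega)
    have h2 : f ⟨i, by omega⟩ < f ⟨i + 1, hi⟩ := hf (by simp [Fin.lt_def])
    have h3 := Fin.lt_def.1 h2
    simp only at h1 ⊢
    omega

lemma swap_strictMono {n k : ℕ} (f : Fin k → Fin n) (a b : Fin n) (hab : (b : ℕ) = a + 1)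
    (hf : StrictMono f) (hP : ¬ ((∃ i, f i = a) ∧ ∃ i, f i = b)) :
    StrictMono (fun i => Equiv.swap a b (f i)) := by
  intro i i' hi
  have h := hf hi
  simp only [Equiv.swap_apply_def]
  have h1 : ¬ (f i = a ∧ f i' = b) := fun h => hP ⟨⟨i, h.1⟩, ⟨i', h.2⟩⟩
  rw [Fin.lt_def] at h ⊢
  simp only [Fin.ext_iff] at h1 ⊢
  split_ifs <;> omega

lemma pair_cancel {F : Type*} [Field F] {n k : ℕ}
    (X : Matrix (Fin n) (Fin k) F) (f : Fin k → Fin n) (a b : Fin n)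
    (hab : (b : ℕ) = a + 1) (j j' : Fin k) (hjj : j ≠ j')
    (hf : StrictMono f) (r : Fin k) (hr : f r = a) (hb : ∀ i, f i ≠ b)
    (hz : ∀ i, i ≠ a → i ≠ b → X i j' = 0)
    (hrow : ∀ m, m ≠ j → X a m = X b m) :
    cterm X f + cterm X (fun i => Equiv.swap a b (f i)) = 0 := by
  have hg : (fun i => Equiv.swap a b (f i)) = Function.update f r b := by
    funext i
    by_cases hi : i = r
    · subst hi; simp [hr]
    · have : f i ≠ a := fun h => hi (hf.injective (h.trans hr.symm))
      rw [Function.update_of_ne hi, Equiv.swap_apply_of_ne_of_ne this (hb i)]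
  have hgm := swap_strictMono f a b hab hf (fun h => h.2.elim fun i hi => hb i hi)
  rw [hg] at hgm ⊢
  unfold cterm
  rw [if_pos hf, if_pos hgm]
  have he : (∑ i : Fin k, ((Function.update f r b i : ℕ) - (i : ℕ)))
      = (∑ i : Fin k, ((f i : ℕ) - (i : ℕ))) + 1 := by
    rw [← Finset.add_sum_erase _ _ (Finset.mem_univ r),
      ← Finset.add_sum_erase (f := fun i => (f i : ℕ) - (i : ℕ)) _ (Finset.mem_univ r)]
    have : ∑ x ∈ Finset.univ.erase r, ((Function.update f r b x : ℕ) - (x : ℕ))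
        = ∑ x ∈ Finset.univ.erase r, ((f x : ℕ) - (x : ℕ)) := by
      apply Finset.sum_congr rfl
      intro x hx
      rw [Function.update_of_ne (Finset.ne_of_mem_erase hx)]
    rw [this]
    have h1 := strictMono_id_le f hf r
    simp only [Function.update_self, hab]
    rw [hr] at h1 ⊢
    omega
  have hd : (X.submatrix (Function.update f r b) id).det = (X.submatrix f id).det := by
    set M := X.submatrix f id with hM
    have e1 : X.submatrix (Function.update f r b) id = M.updateRow r (M r + (X b - X a)) := by
      ext i m
      by_cases hi : i = r
      · subst hi; simp [hM, hr]
      · simp [hi, hM]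
    rw [e1, Matrix.det_updateRow_add, Matrix.updateRow_eq_self]
    refine (add_eq_left (a := M.det)).2 (Matrix.det_eq_zero_of_column_eq_zero j' ?_)
    intro i
    by_cases hi : i = r
    · subst hi; simp [hrow j' hjj.symm]
    · have : f i ≠ a := fun h => hi (hf.injective (h.trans hr.symm))
      simp [hi, hM, hz _ this (hb i)]
  rw [he, hd, pow_succ]
  ring

lemma nonconst_exists {F : Type*} [Field F] {n k : ℕ} (hk : 2 ≤ k) (hkn : k < n)
    (y : Fin n → F) (j : Fin k) (a b : Fin n) (hab : (b : ℕ) = a + 1) (hy : y a ≠ y b) :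
    ∃ B : Matrix (Fin n) (Fin k) F, (∀ i, B i j = y i) ∧ cullisDet B ≠ 0 := by
  classical
  have hne : a ≠ b := by intro h; simp [h] at hab
  obtain ⟨S, hS, hcard⟩ := Finset.exists_superset_card_eq (s := ({a, b} : Finset (Fin n))) (n := k)
    (by rw [Finset.card_pair hne]; exact hk) (by simpa using hkn.le)
  let s := S.orderEmbOfFin hcard
  have hrange : ∀ x ∈ S, ∃ i, s i = x := by
    intro x hx
    have : x ∈ Set.range s := by
      rw [Finset.range_orderEmbOfFin]; exact hx
    exact this
  obtain ⟨p, hp⟩ := hrange a (hS (by simp))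
  obtain ⟨p', hp'⟩ := hrange b (hS (by simp))
  have hpp : p ≠ p' := by rintro rfl; exact hne (hp.symm.trans hp')
  let σ : Equiv.Perm (Fin k) := Equiv.swap j p
  have hσ : σ j = p := Equiv.swap_apply_left _ _
  let j' := σ.symm p'
  have hj' : σ j' = p' := σ.apply_symm_apply p'
  have hjj : j ≠ j' := by
    intro h; apply hpp; rw [← hσ, ← hj', ← h]
  let B : Matrix (Fin n) (Fin k) F := fun i m =>
    if m = j then y i else if m = j' then (if i = a ∨ i = b then 1 else 0)
      else if i = s (σ m) then 1 else 0
  have hBj : ∀ i, B i j = y i := fun i => by simp [B]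
  have hBj' : ∀ i, B i j' = if i = a ∨ i = b then 1 else 0 := fun i => by simp [B, hjj.symm]
  have hBm : ∀ i m, m ≠ j → m ≠ j' → B i m = if i = s (σ m) then 1 else 0 :=
    fun i m h1 h2 => by simp [B, h1, h2]
  have hsa : ∀ m, m ≠ j → s (σ m) ≠ a := by
    intro m hm h
    exact hm (σ.injective ((s.injective (h.trans hp.symm)).trans hσ.symm))
  have hsb : ∀ m, m ≠ j' → s (σ m) ≠ b := by
    intro m hm h
    exact hm (σ.injective ((s.injective (h.trans hp'.symm)).trans hj'.symm))
  have hz : ∀ i, i ≠ a → i ≠ b → B i j' = 0 := fun i h1 h2 => by simp [hBj', h1, h2]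
  have hrow : ∀ m, m ≠ j → B a m = B b m := by
    intro m hm
    by_cases h : m = j'
    · subst h; simp [hBj']
    · simp [hBm _ m hm h, (hsa m hm).symm, (hsb m h).symm]
  refine ⟨B, hBj, ?_⟩
  rw [cullisDet_eq_cterm, ← Finset.sum_filter_add_sum_filter_not Finset.univ
    (fun f : Fin k → Fin n => (∃ i, f i = a) ∧ ∃ i, f i = b)]
  have h2 : ∑ f ∈ Finset.univ.filter
      (fun f : Fin k → Fin n => ¬ ((∃ i, f i = a) ∧ ∃ i, f i = b)), cterm B f = 0 := by
    have hPP : ∀ f : Fin k → Fin n, ¬ ((∃ i, f i = a) ∧ ∃ i, f i = b) →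
        ¬ ((∃ i, Equiv.swap a b (f i) = a) ∧ ∃ i, Equiv.swap a b (f i) = b) := by
      rintro f h ⟨⟨i, hi⟩, ⟨i', hi'⟩⟩
      apply h
      refine ⟨⟨i', ?_⟩, ⟨i, ?_⟩⟩
      · have : Equiv.swap a b (f i') = Equiv.swap a b a := by rw [hi', Equiv.swap_apply_left]
        exact (Equiv.swap a b).injective this
      · have : Equiv.swap a b (f i) = Equiv.swap a b b := by rw [hi, Equiv.swap_apply_right]
        exact (Equiv.swap a b).injective this
    have hneither : ∀ f : Fin k → Fin n, (∀ i, f i ≠ a) → (∀ i, f i ≠ b) → cterm B f = 0 :=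
      fun f h1 h2 => cterm_zero_of_col B f j' (fun i => hz _ (h1 i) (h2 i))
    refine Finset.sum_involution (fun f _ => fun i => Equiv.swap a b (f i)) ?_ ?_ ?_ ?_
    · intro f hf
      have hP : ¬ ((∃ i, f i = a) ∧ ∃ i, f i = b) := by simpa only [Finset.mem_filter, Finset.mem_univ, true_and] using hf
      have hff : (fun i => Equiv.swap a b (Equiv.swap a b (f i))) = f := by
        funext i; simp
      by_cases hm : StrictMono f
      · have hgm := swap_strictMono f a b hab hm hP
        by_cases h1 : ∃ i, f i = a
        · obtain ⟨r, hr⟩ := h1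
          exact pair_cancel B f a b hab j j' hjj hm r hr (fun i hi => hP ⟨⟨r, hr⟩, ⟨i, hi⟩⟩) hz hrow
        · by_cases h2 : ∃ i, f i = b
          · obtain ⟨r, hr⟩ := h2
            have := pair_cancel B (fun i => Equiv.swap a b (f i)) a b hab j j' hjj hgm r
              (by simp [hr]) (fun i hi => hPP f hP ⟨⟨r, by simp [hr]⟩, ⟨i, hi⟩⟩) hz hrow
            rw [hff] at this
            rw [add_comm]; exact this
          · push Not at h1 h2
            have hfe : (fun i => Equiv.swap a b (f i)) = f := by
              funext i; exact Equiv.swap_apply_of_ne_of_ne (h1 i) (h2 i)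
            rw [hfe, hneither f h1 h2, add_zero]
      · have hgm : ¬ StrictMono (fun i => Equiv.swap a b (f i)) := by
          intro h
          have := swap_strictMono _ a b hab h (hPP f hP)
          rw [hff] at this
          exact hm this
        simp [cterm, hm, hgm]
    · intro f _ hf0 hfe
      apply hf0
      have hh : ∀ i, Equiv.swap a b (f i) = f i := fun i => congrFun hfe i
      apply hneither
      · intro i hi
        have := hh i
        rw [hi, Equiv.swap_apply_left] at this
        exact hne this.symm
      · intro i hi
        have := hh i
        rw [hi, Equiv.swap_apply_right] at this
        exact hne this
    · intro f hf
      have hP : ¬ ((∃ i, f i = a) ∧ ∃ i, f i = b) := by simpa only [Finset.mem_filter, Finset.mem_univ, true_and] using hf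
      simp only [Finset.mem_filter, Finset.mem_univ, true_and]
      exact hPP f hP
    · intro f _
      funext i; simp
  rw [h2, add_zero, Finset.sum_eq_single (s : Fin k → Fin n)]
  · unfold cterm
    rw [if_pos s.strictMono]
    refine mul_ne_zero (pow_ne_zero _ (by simp)) ?_
    intro h0
    obtain ⟨v, hv, hv0⟩ := Matrix.exists_vecMul_eq_zero_iff.2 h0
    have hcol : ∀ m, ∑ i, v i * B (s i) m = 0 := fun m => by
      have := congrFun hv0 m
      simpa [Matrix.vecMul, dotProduct] using this
    have hvq : ∀ q, q ≠ p → q ≠ p' → v q = 0 := by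
      intro q h1 h2
      have := hcol (σ.symm q)
      rw [Finset.sum_eq_single q] at this
      · rw [hBm] at this
        · simpa using this
        · intro h; apply h1; rw [← hσ, ← h]; simp
        · intro h; apply h2; rw [← hj', ← h]; simp
      · intro i _ hi
        rw [hBm]
        · simp [hi]
        · intro h; apply h1; rw [← hσ, ← h]; simp
        · intro h; apply h2; rw [← hj', ← h]; simp
      · simp
    have hsum : ∀ m, v p * B a m + v p' * B b m = 0 := by
      intro m
      have := hcol m
      rw [Finset.sum_eq_add (a := p) (b := p') hpp] at this
      · simpa [hp, hp'] using this
      · intro c _ hc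
        rw [hvq c hc.1 hc.2, zero_mul]
      · simp
      · simp
    have e1 := hsum j'
    have e2 := hsum j
    simp only [hBj', hBj] at e1 e2
    simp at e1
    have e3 : v p * (y a - y b) = 0 := by linear_combination e2 - y b * e1
    have e4 : v p = 0 := (mul_eq_zero.1 e3).resolve_right (sub_ne_zero.2 hy)
    have e5 : v p' = 0 := by rw [e4, zero_add] at e1; exact e1
    apply hv
    funext q
    by_cases h1 : q = p
    · rw [h1, e4]; rfl
    · by_cases h2 : q = p'
      · rw [h2, e5]; rfl
      · exact hvq q h1 h2
  · intro f hf hfs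
    by_contra hc
    have hm : StrictMono f := by
      by_contra h
      exact hc (by simp [cterm, h])
    obtain ⟨ha, hb⟩ := (Finset.mem_filter.1 hf).2
    have hall : ∀ q, ∃ i, f i = s q := by
      intro q
      by_cases h1 : q = p
      · rw [h1, hp]; exact ha
      by_cases h2 : q = p'
      · rw [h2, hp']; exact hb
      by_contra h3
      push Not at h3
      apply hc
      apply cterm_zero_of_col B f (σ.symm q)
      intro i
      rw [hBm]
      · simp [h3 i]
      · intro h; apply h1; rw [← hσ, ← h]; simp
      · intro h; apply h2; rw [← hj', ← h]; simp
    apply hfs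
    have himg : S = Finset.univ.image f := by
      apply Finset.eq_of_subset_of_card_le
      · intro x hx
        obtain ⟨q, hq⟩ := hrange x hx
        obtain ⟨i, hi⟩ := hall q
        exact Finset.mem_image.2 ⟨i, Finset.mem_univ _, hi.trans hq⟩
      · rw [Finset.card_image_of_injective _ hm.injective, hcard]; simp
    exact Finset.orderEmbOfFin_unique hcard
      (fun x => by rw [himg]; exact Finset.mem_image_of_mem _ (Finset.mem_univ _)) hm
  · intro h
    exact absurd (Finset.mem_filter.2 ⟨Finset.mem_univ _, ⟨p, hp⟩, ⟨p', hp'⟩⟩) h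

lemma rad_le {F : Type*} [Field F] {n k : ℕ} (hk : 2 ≤ k) (hkn : k < n)
    (Y : Matrix (Fin n) (Fin k) F)
    (hY : ∀ (A : Matrix (Fin n) (Fin k) F) (l : F), cullisDet (A + l • Y) = cullisDet A) :
    ∀ i i' : Fin n, Y i = Y i' := by
  have hcons : ∀ (j : Fin k) (a b : Fin n), (b : ℕ) = a + 1 → Y a j = Y b j := by
    intro j a b hab
    by_contra hne
    obtain ⟨B, hB, hB0⟩ := nonconst_exists hk hkn (fun i => Y i j) j a b hab hne
    apply hB0
    have h := hY (B - Y) 1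
    rw [one_smul, sub_add_cancel] at h
    rw [h, cullisDet_eq_cterm]
    exact Finset.sum_eq_zero fun f _ => cterm_zero_of_col _ f j (fun i => by simp [hB])
  have h0 : ∀ (m : ℕ) (hm : m < n), Y ⟨m, hm⟩ = Y ⟨0, by omega⟩ := by
    intro m
    induction m with
    | zero => intro _; rfl
    | succ m ih =>
      intro hm
      rw [← ih (by omega)]
      funext j
      exact (hcons j ⟨m, by omega⟩ ⟨m + 1, hm⟩ rfl).symm
  intro i i'
  rw [h0 i i.2, h0 i' i'.2]

/-- Lemma 4.10(a): if `T` preserves `det_{n,k}` and its image is the space of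
matrices with zero last row, then `ker T` equals the radical of `det_{n,k}`,
which equals `W_{n,k}`. -/
theorem stmt10 {F : Type*} [Field F] {n k : ℕ} (hk : 2 ≤ k) (hkn : k < n)
    (hodd : Odd (n + k)) (hF : (k : Cardinal) < Cardinal.mk F)
    (T : Matrix (Fin n) (Fin k) F →ₗ[F] Matrix (Fin n) (Fin k) F)
    (hT : ∀ X, cullisDet (T X) = cullisDet X)
    (hImg : Set.range (⇑T) =
      {X : Matrix (Fin n) (Fin k) F | ∀ q : Fin k, X ⟨n - 1, by omega⟩ q = 0}) :
    (LinearMap.ker T : Set (Matrix (Fin n) (Fin k) F)) =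
        {Y : Matrix (Fin n) (Fin k) F | ∀ (A : Matrix (Fin n) (Fin k) F) (l : F),
          cullisDet (A + l • Y) = cullisDet A} ∧
      {Y : Matrix (Fin n) (Fin k) F | ∀ (A : Matrix (Fin n) (Fin k) F) (l : F),
          cullisDet (A + l • Y) = cullisDet A} =
        {Y : Matrix (Fin n) (Fin k) F | ∀ i i' : Fin n, Y i = Y i'} := by
  have hker : ∀ Y ∈ LinearMap.ker T, ∀ (A : Matrix (Fin n) (Fin k) F) (l : F),
      cullisDet (A + l • Y) = cullisDet A := by
    intro Y hY A l
    rw [← hT (A + l • Y), map_add, map_smul, LinearMap.mem_ker.1 hY, smul_zero, add_zero, hT]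
  let W : Submodule F (Matrix (Fin n) (Fin k) F) :=
    { carrier := {Y | ∀ i i' : Fin n, Y i = Y i'}
      add_mem' := by
        intro x y hx hy i i'
        have h1 := hx i i'
        have h2 := hy i i'
        change x i + y i = x i' + y i'
        rw [h1, h2]
      zero_mem' := fun _ _ => rfl
      smul_mem' := by
        intro c x hx i i'
        have h1 := hx i i'
        change c • x i = c • x i'
        rw [h1] }
  have hle : LinearMap.ker T ≤ W := fun Y hY => rad_le hk hkn Y (hker Y hY)
  let L : Matrix (Fin n) (Fin k) F →ₗ[F] (Fin k → F) :=
    { toFun := fun X => X ⟨n - 1, by omega⟩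
      map_add' := fun _ _ => rfl
      map_smul' := fun _ _ => rfl }
  have hLs : Function.Surjective L := fun v => ⟨fun _ => v, rfl⟩
  have hrange : LinearMap.range T = LinearMap.ker L := by
    apply SetLike.coe_injective
    rw [LinearMap.coe_range, hImg]
    ext X
    simp only [Set.mem_ofPred_eq, SetLike.mem_coe, LinearMap.mem_ker]
    exact ⟨fun h => funext h, fun h q => congrFun h q⟩
  have hfr : Module.finrank F W ≤ Module.finrank F (LinearMap.ker T) := by
    have e1 := LinearMap.finrank_range_add_finrank_ker T
    have e2 := LinearMap.finrank_range_add_finrank_ker L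
    rw [LinearMap.range_eq_top.2 hLs, finrank_top] at e2
    rw [hrange] at e1
    have e3 : Module.finrank F W ≤ Module.finrank F (Fin k → F) := by
      apply LinearMap.finrank_le_finrank_of_injective (f := L.domRestrict W)
      intro x y hxy
      apply Subtype.ext
      funext i
      rw [x.2 i ⟨n - 1, by omega⟩, y.2 i ⟨n - 1, by omega⟩]
      exact hxy
    omega
  have heq : LinearMap.ker T = W := Submodule.eq_of_le_of_finrank_le hle hfr
  constructor
  · apply Set.Subset.antisymm
    · exact fun Y hY => hker Y hY
    · intro Y hY
      rw [heq]
      exact rad_le hk hkn Y hY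
  · apply Set.Subset.antisymm
    · exact fun Y hY => rad_le hk hkn Y hY
    · intro Y hY
      exact hker Y (by rw [heq]; exact hY)
end
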